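/- For every integer a ≥ 4 and general lines L_1,…,L_6 in P^3 (i.e., there exists a nonzero polynomial P in the 48 coordinates of spanning vectors a_1,b_1,…,a_6,b_6 ∈ ℂ^4 such that whenever P does not vanish, each pair a_i,b_i is linearly independent, the subspaces L_i = span{a_i,b_i} pairwise intersect only in 0, and the following holds): the ℂ-vector space of homogeneous polynomials F of degree 19a − 72 in ℂ[x_0,x_1,x_2,x_3] with F ∈ I(L_i)^{5a−19} for all i = 1,…,6 has dimension at least binom(a+3,3) − 6(a+1). (This is obtained by applying the Todd transformation to the nonspecial system of surfaces of degree a through the six lines, and for a large enough it produces infinitely many unexpected systems.) -/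

import Mathlib

open MvPolynomial

noncomputable section

abbrev C4 : Type := Fin 4 → ℂ
abbrev R3 : Type := MvPolynomial (Fin 4) ℂ

/-- The homogeneous ideal of the line in `P^3` corresponding to a linear subspace
`L ⊆ ℂ^4`: all polynomials vanishing identically on `L`. -/
def lineIdeal (L : Submodule ℂ C4) : Ideal R3 where
  carrier := {F | ∀ v ∈ L, eval v F = 0}
  add_mem' := by
    intro a b ha hb v hv
    simp [ha v hv, hb v hv]
  zero_mem' := by
    intro v hv
    simp
  smul_mem' := by
    intro c F hF v hv
    simp [smul_eq_mul, hF v hv]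

/-- The linear system `𝓛_d(m_1, …, m_s)`: homogeneous forms of degree `d`
vanishing to order `m i` along the line `L i`, as a `ℂ`-subspace. -/
def linSys (d : ℕ) {s : ℕ} (L : Fin s → Submodule ℂ C4) (m : Fin s → ℕ) :
    Submodule ℂ R3 :=
  homogeneousSubmodule (Fin 4) ℂ d ⊓
    ⨅ i, Submodule.restrictScalars ℂ ((lineIdeal (L i)) ^ (m i))

/-- A property `Q` holds for `s` *general* lines in `P^3`: there is a nonzero
polynomial `P` in the `8s` coordinates of spanning vectors such that whenever
`P` does not vanish, each pair of vectors is linearly independent, the spanned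
planes are pairwise disjoint, and `Q` holds for these lines. -/
def GeneralLines (s : ℕ) (Q : (Fin s → Submodule ℂ C4) → Prop) : Prop :=
  ∃ P : MvPolynomial (Fin s × Fin 2 × Fin 4) ℂ, P ≠ 0 ∧
    ∀ v : Fin s → Fin 2 → C4,
      MvPolynomial.eval (fun p => v p.1 p.2.1 p.2.2) P ≠ 0 →
      (∀ i, LinearIndependent ℂ ![v i 0, v i 1]) ∧
      (∀ i j, i ≠ j →
        Submodule.span ℂ {v i 0, v i 1} ⊓ Submodule.span ℂ {v j 0, v j 1} = ⊥) ∧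
      Q (fun i => Submodule.span ℂ {v i 0, v i 1})

section
namespace Todd

section alg
variable {B : Type*} [CommRing B] {B' : Type*} [CommRing B']

def d4 (a b c d : Fin 4 → B) : B :=
  (a 0 * b 1 - a 1 * b 0) * (c 2 * d 3 - c 3 * d 2)
  - (a 0 * b 2 - a 2 * b 0) * (c 1 * d 3 - c 3 * d 1)
  + (a 0 * b 3 - a 3 * b 0) * (c 1 * d 2 - c 2 * d 1)
  + (a 1 * b 2 - a 2 * b 1) * (c 0 * d 3 - c 3 * d 0)
  - (a 1 * b 3 - a 3 * b 1) * (c 0 * d 2 - c 2 * d 0)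
  + (a 2 * b 3 - a 3 * b 2) * (c 0 * d 1 - c 1 * d 0)

/-- cross product of three vectors -/
def cr (a b c : Fin 4 → B) : Fin 4 → B :=
  ![ -((a 1 * b 2 - a 2 * b 1) * c 3 - (a 1 * b 3 - a 3 * b 1) * c 2 + (a 2 * b 3 - a 3 * b 2) * c 1),
     (a 0 * b 2 - a 2 * b 0) * c 3 - (a 0 * b 3 - a 3 * b 0) * c 2 + (a 2 * b 3 - a 3 * b 2) * c 0,
     -((a 0 * b 1 - a 1 * b 0) * c 3 - (a 0 * b 3 - a 3 * b 0) * c 1 + (a 1 * b 3 - a 3 * b 1) * c 0),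
     (a 0 * b 1 - a 1 * b 0) * c 2 - (a 0 * b 2 - a 2 * b 0) * c 1 + (a 1 * b 2 - a 2 * b 1) * c 0 ]

def dt (p w : Fin 4 → B) : B := p 0 * w 0 + p 1 * w 1 + p 2 * w 2 + p 3 * w 3

theorem dt_cr (a b c w : Fin 4 → B) : dt (cr a b c) w = d4 a b c w := by
  simp [dt, cr, d4]; ring

/-- point of the line with coordinates `t` -/
def lin (v : Fin 2 → Fin 4 → B) (t : Fin 2 → B) : Fin 4 → B := fun k => t 0 * v 0 k + t 1 * v 1 k

def pv (v : Fin 6 → Fin 2 → Fin 4 → B) (x : Fin 4 → B) (i : Fin 6) : Fin 4 → B :=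
  cr (v i 0) (v i 1) x

def qq (p : Fin 6 → Fin 4 → B) (v : Fin 6 → Fin 2 → Fin 4 → B) (i m n : Fin 6) : B :=
  dt (p m) (v n 0) * dt (p i) (v n 1) - dt (p m) (v n 1) * dt (p i) (v n 0)

theorem qq_swap12 (p : Fin 6 → Fin 4 → B) (v : Fin 6 → Fin 2 → Fin 4 → B) (i m n : Fin 6) :
    qq p v m i n = - qq p v i m n := by simp only [qq]; ring

theorem d4_plucker (a b c d e f g h: Fin 4 → B) :
    d4 a b c d * d4 e f g h = d4 e b c d * d4 a f g h + d4 f b c d * d4 e a g h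
      + d4 g b c d * d4 e f a h + d4 h b c d * d4 e f g a := by
  simp only [d4]; ring

set_option maxHeartbeats 4000000 in
theorem qq_pv_swap23 (v : Fin 6 → Fin 2 → Fin 4 → B) (x : Fin 4 → B) (i m n : Fin 6) :
    qq (pv v x) v i n m = - qq (pv v x) v i m n := by
  simp only [qq, pv, dt_cr]
  simp only [d4]
  ring

theorem d4_map (f : B →+* B') (a b c d : Fin 4 → B) :
    f (d4 a b c d) = d4 (f ∘ a) (f ∘ b) (f ∘ c) (f ∘ d) := by
  simp [d4]

theorem dt_map (f : B →+* B') (a b : Fin 4 → B) :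
    f (dt a b) = dt (f ∘ a) (f ∘ b) := by
  simp [dt]

theorem cr_map (f : B →+* B') (a b c : Fin 4 → B) :
    f ∘ (cr a b c) = cr (f ∘ a) (f ∘ b) (f ∘ c) := by
  funext k; fin_cases k <;> simp [cr]

end alg
end Todd
end

section
namespace Todd
section loc
variable {B : Type*} [CommRing B]

def NN (v : Fin 6 → Fin 2 → Fin 4 → B) (i m n : Fin 6) : Fin 4 → B :=
  ![d4 (v i 0) (v i 1) (v m 0) (v n 0), d4 (v i 0) (v i 1) (v m 0) (v n 1),
    d4 (v i 0) (v i 1) (v m 1) (v n 0), d4 (v i 0) (v i 1) (v m 1) (v n 1)]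

def c5 (v : Fin 6 → Fin 2 → Fin 4 → B) (m n i j k : Fin 6) : B :=
  cr (NN v i m n) (NN v j m n) (NN v k m n) 0 * cr (NN v i m n) (NN v j m n) (NN v k m n) 3
  - cr (NN v i m n) (NN v j m n) (NN v k m n) 1 * cr (NN v i m n) (NN v j m n) (NN v k m n) 2

theorem cr_par (N1 N2 N3 t : Fin 4 → B) (h1 : dt N1 t = 0) (h2 : dt N2 t = 0) (h3 : dt N3 t = 0)
    (a b : Fin 4) : cr N1 N2 N3 a * t b = cr N1 N2 N3 b * t a := by
  simp only [dt] at h1 h2 h3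
  have key : ∀ a b c d : Fin 4, N1 a * t a + N1 b * t b + N1 c * t c + N1 d * t d = 0 →
     N2 a * t a + N2 b * t b + N2 c * t c + N2 d * t d = 0 →
     N3 a * t a + N3 b * t b + N3 c * t c + N3 d * t d = 0 →
     (N1 b * (N2 c * N3 d - N2 d * N3 c) - N1 c * (N2 b * N3 d - N2 d * N3 b)
       + N1 d * (N2 b * N3 c - N2 c * N3 b)) * t b
     = -(N1 a * (N2 c * N3 d - N2 d * N3 c) - N1 c * (N2 a * N3 d - N2 d * N3 a)
       + N1 d * (N2 a * N3 c - N2 c * N3 a)) * t a := by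
    intro a b c d h1 h2 h3
    linear_combination (N2 c * N3 d - N2 d * N3 c) * h1 - (N1 c * N3 d - N1 d * N3 c) * h2
      + (N1 c * N2 d - N1 d * N2 c) * h3
  have g : ∀ {x y : B}, x - y = 0 → x = y := fun h => sub_eq_zero.1 h
  have k01 := key 0 1 2 3 (by linear_combination h1) (by linear_combination h2) (by linear_combination h3)
  have k02 := key 0 2 1 3 (by linear_combination h1) (by linear_combination h2) (by linear_combination h3)
  have k03 := key 0 3 1 2 (by linear_combination h1) (by linear_combination h2) (by linear_combination h3)
  have k12 := key 1 2 0 3 (by linear_combination h1) (by linear_combination h2) (by linear_combination h3)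
  have k13 := key 1 3 0 2 (by linear_combination h1) (by linear_combination h2) (by linear_combination h3)
  have k23 := key 2 3 0 1 (by linear_combination h1) (by linear_combination h2) (by linear_combination h3)
  fin_cases a <;> fin_cases b <;> simp [cr] <;>
  first
   | ring1
   | linear_combination k01 | linear_combination -k01
   | linear_combination k02 | linear_combination -k02
   | linear_combination k03 | linear_combination -k03
   | linear_combination k12 | linear_combination -k12
   | linear_combination k13 | linear_combination -k13
   | linear_combination k23 | linear_combination -k23

theorem c5_kill [IsDomain B] (N1 N2 N3 t : Fin 4 → B) (h1 : dt N1 t = 0) (h2 : dt N2 t = 0)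
    (h3 : dt N3 t = 0) (ht : t 0 * t 3 = t 1 * t 2)
    (hc : cr N1 N2 N3 0 * cr N1 N2 N3 3 - cr N1 N2 N3 1 * cr N1 N2 N3 2 ≠ 0) (b : Fin 4) :
    t b = 0 := by
  have h := cr_par N1 N2 N3 t h1 h2 h3
  have : (cr N1 N2 N3 0 * cr N1 N2 N3 3 - cr N1 N2 N3 1 * cr N1 N2 N3 2) * (t b * t b) = 0 := by
    have e0 := h 0 b
    have e1 := h 1 b
    have e2 := h 2 b
    have e3 := h 3 b
    linear_combination (cr N1 N2 N3 3 * t b) * e0 + (cr N1 N2 N3 b * t 0) * e3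
      - (cr N1 N2 N3 2 * t b) * e1 - (cr N1 N2 N3 b * t 1) * e2 + (cr N1 N2 N3 b)^2 * ht
  rcases mul_eq_zero.1 this with h | h
  · exact absurd h hc
  · simpa using h

theorem d4_lin (v : Fin 2 → Fin 4 → B) (s t : Fin 2 → B) (w : Fin 2 → Fin 4 → B) :
   d4 (v 0) (v 1) (lin w t) = fun x => t 0 * d4 (v 0) (v 1) (w 0) x + t 1 * d4 (v 0) (v 1) (w 1) x := by
  funext x; simp [d4, lin]; ring

theorem d4_NN (v : Fin 6 → Fin 2 → Fin 4 → B) (s t : Fin 2 → B) (i m n : Fin 6) :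
   d4 (v i 0) (v i 1) (lin (v m) s) (lin (v n) t)
    = dt (NN v i m n) ![s 0 * t 0, s 0 * t 1, s 1 * t 0, s 1 * t 1] := by
  simp [d4, lin, NN, dt]; ring

theorem lin_eq_zero [IsDomain B] (v w : Fin 2 → Fin 4 → B) (hD : d4 (v 0) (v 1) (w 0) (w 1) ≠ 0)
    (s t : Fin 2 → B) (h : ∀ k, lin v s k + lin w t k = 0) : (∀ c, s c = 0) ∧ ∀ c, t c = 0 := by
  have h0 := h 0
  have h1 := h 1
  have h2 := h 2
  have h3 := h 3
  simp only [lin] at h0 h1 h2 h3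
  have e1 : s 0 * d4 (v 0) (v 1) (w 0) (w 1) = 0 := by
    have := dt_cr (v 1) (w 0) (w 1) (fun k => lin v s k + lin w t k)
    have h' : (fun k => lin v s k + lin w t k) = fun _ => 0 := funext h
    rw [h'] at this
    have e : d4 (v 1) (w 0) (w 1) (fun k => lin v s k + lin w t k) = - (s 0 * d4 (v 0) (v 1) (w 0) (w 1)) := by
      simp only [d4, lin]; ring
    rw [h'] at e
    simp [dt] at this
    rw [← this] at e; exact neg_eq_zero.1 e.symm
  have e2 : s 1 * d4 (v 0) (v 1) (w 0) (w 1) = 0 := by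
    have := dt_cr (v 0) (w 0) (w 1) (fun k => lin v s k + lin w t k)
    have h' : (fun k => lin v s k + lin w t k) = fun _ => 0 := funext h
    rw [h'] at this
    have e : d4 (v 0) (w 0) (w 1) (fun k => lin v s k + lin w t k) = (s 1 * d4 (v 0) (v 1) (w 0) (w 1)) := by
      simp only [d4, lin]; ring
    rw [h'] at e
    simp [dt] at this
    rw [← this] at e; exact e.symm
  have e3 : t 0 * d4 (v 0) (v 1) (w 0) (w 1) = 0 := by
    have := dt_cr (v 0) (v 1) (w 1) (fun k => lin v s k + lin w t k)
    have h' : (fun k => lin v s k + lin w t k) = fun _ => 0 := funext h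
    rw [h'] at this
    have e : d4 (v 0) (v 1) (w 1) (fun k => lin v s k + lin w t k) = - (t 0 * d4 (v 0) (v 1) (w 0) (w 1)) := by
      simp only [d4, lin]; ring
    rw [h'] at e
    simp [dt] at this
    rw [← this] at e; exact neg_eq_zero.1 e.symm
  have e4 : t 1 * d4 (v 0) (v 1) (w 0) (w 1) = 0 := by
    have := dt_cr (v 0) (v 1) (w 0) (fun k => lin v s k + lin w t k)
    have h' : (fun k => lin v s k + lin w t k) = fun _ => 0 := funext h
    rw [h'] at this
    have e : d4 (v 0) (v 1) (w 0) (fun k => lin v s k + lin w t k) = (t 1 * d4 (v 0) (v 1) (w 0) (w 1)) := by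
      simp only [d4, lin]; ring
    rw [h'] at e
    simp [dt] at this
    rw [← this] at e; exact e.symm
  constructor <;> intro c <;> fin_cases c <;> simp_all

theorem sum_qq (p : Fin 6 → Fin 4 → B) (v : Fin 6 → Fin 2 → Fin 4 → B) (s : Fin 6 → Fin 4 → B)
    (hsum : ∀ k l, ∑ i, s i k * p i l = 0) (m n : Fin 6) (k : Fin 4) :
    ∑ i, qq p v i m n * s i k = 0 := by
  have key : ∀ w : Fin 4 → B, ∑ i, s i k * dt (p i) w = 0 := by
    intro w
    have h0 := hsum k 0
    have h1 := hsum k 1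
    have h2 := hsum k 2
    have h3 := hsum k 3
    simp only [Fin.sum_univ_six, dt] at *
    linear_combination w 0 * h0 + w 1 * h1 + w 2 * h2 + w 3 * h3
  have h0 := key (v n 0)
  have h1 := key (v n 1)
  simp only [Fin.sum_univ_six, qq] at *
  linear_combination dt (p m) (v n 0) * h1 - dt (p m) (v n 1) * h0

theorem qq_self (p : Fin 6 → Fin 4 → B) (v : Fin 6 → Fin 2 → Fin 4 → B) (m n : Fin 6) :
    qq p v m m n = 0 := by simp only [qq]; ring

theorem qq_self' (p : Fin 6 → Fin 4 → B) (v : Fin 6 → Fin 2 → Fin 4 → B)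
    (hpv : ∀ i c, dt (p i) (v i c) = 0) (m n : Fin 6) :
    qq p v n m n = 0 := by simp only [qq, hpv]; ring

set_option synthInstance.maxHeartbeats 2000000 in
set_option synthInstance.maxSize 2000 in
theorem comb1 : ∀ b0 b1 b2 b3 b4 b5 : Bool, ∀ o : Fin 6,
   (∀ i : Fin 6, ![b0,b1,b2,b3,b4,b5] i = false) ∨
   (∃ i : Fin 6, ∀ j : Fin 6, ![b0,b1,b2,b3,b4,b5] j = true ↔ i = j) ∨
   (∃ i j m n : Fin 6, [i,j,m,n].Nodup ∧ ![b0,b1,b2,b3,b4,b5] i = true ∧ ![b0,b1,b2,b3,b4,b5] j = true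
     ∧ m ≠ o ∧ n ≠ o ∧ ∀ k : Fin 6, k ∉ [i,j,m,n] → ![b0,b1,b2,b3,b4,b5] k = false) ∨
   (∃ m n i j k : Fin 6, [m,n,i,j,k].Nodup ∧ ∀ l ∈ [m,n,i,j,k], ![b0,b1,b2,b3,b4,b5] l = true) := by
  decide +kernel

theorem comb2 (P : Fin 6 → Prop) (o : Fin 6) :
   (∀ i, ¬ P i) ∨ (∃ i, ∀ j, P j ↔ i = j) ∨
   (∃ i j m n : Fin 6, [i,j,m,n].Nodup ∧ P i ∧ P j
     ∧ m ≠ o ∧ n ≠ o ∧ ∀ k, k ∉ [i,j,m,n] → ¬ P k) ∨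
   (∃ m n i j k : Fin 6, [m,n,i,j,k].Nodup ∧ ∀ l ∈ [m,n,i,j,k], P l) := by
  classical
  have h := comb1 (decide (P 0)) (decide (P 1)) (decide (P 2)) (decide (P 3)) (decide (P 4)) (decide (P 5)) o
  have e : ∀ i, ![decide (P 0), decide (P 1), decide (P 2), decide (P 3), decide (P 4), decide (P 5)] i
     = decide (P i) := by intro i; fin_cases i <;> rfl
  simp only [e, decide_eq_true_eq, decide_eq_false_iff_not] at h
  exact h

theorem S_b (v : Fin 2 → Fin 4 → B) (s : Fin 2 → B) (x y : Fin 4 → B) :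
    dt (cr (lin v s) x y) (v 1) = s 0 * d4 (v 0) (v 1) x y := by
  rw [dt_cr]; simp [d4, lin]; ring
theorem S_a (v : Fin 2 → Fin 4 → B) (s : Fin 2 → B) (x y : Fin 4 → B) :
    dt (cr (lin v s) x y) (v 0) = - (s 1 * d4 (v 0) (v 1) x y) := by
  rw [dt_cr]; simp [d4, lin]; ring

theorem local_lemma [IsDomain B] (v : Fin 6 → Fin 2 → Fin 4 → B) (p : Fin 6 → Fin 4 → B)
    (st : Fin 6 → Fin 2 → B) (o : Fin 6)
    (hD : ∀ i j, i ≠ j → d4 (v i 0) (v i 1) (v j 0) (v j 1) ≠ 0)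
    (h5 : ∀ m n i j k, [m,n,i,j,k].Nodup → c5 v m n i j k ≠ 0)
    (hpv : ∀ i c, dt (p i) (v i c) = 0) (hp0 : ∀ i, ∃ k, p i k ≠ 0)
    (hsum : ∀ k l, ∑ i, lin (v i) (st i) k * p i l = 0) (hne : ∃ i c, st i c ≠ 0)
    (hQ : ∀ i j m n, [i,j,m,n].Nodup → m ≠ o → n ≠ o → qq p v i m n ≠ 0 ∨ qq p v j m n ≠ 0) :
    ∃ i j k, [i,j,k].Nodup ∧ ∃ l, cr (lin (v i) (st i)) (lin (v j) (st j)) (lin (v k) (st k)) l ≠ 0 := by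
  rcases comb2 (fun i => ∃ c, st i c ≠ 0) o with h | ⟨i, h⟩ | ⟨i, j, m, n, hnd, hi, hj, hm, hn, h⟩ |
    ⟨m, n, i, j, k, hnd, h⟩
  · obtain ⟨i, hi⟩ := hne; exact absurd hi (h i)
  · exfalso
    obtain ⟨l, hl⟩ := hp0 i
    have h1 : ∀ k, lin (v i) (st i) k = 0 := by
      intro k
      have := hsum k l
      rw [Finset.sum_eq_single i] at this
      · exact (mul_eq_zero.1 this).resolve_right hl
      · intro j _ hj
        have : ∀ c, st j c = 0 := by
          have := (h j).not.2 (Ne.symm hj); push Not at this; exact this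
        simp [lin, this]
      · simp
    obtain ⟨j, hj⟩ : ∃ j, i ≠ j := ⟨i + 1, by fin_cases i <;> decide⟩
    obtain ⟨c, hc⟩ := (h i).2 rfl
    exact hc ((lin_eq_zero (v i) (v j) (hD i j hj) (st i) 0 (by intro k; rw [h1 k]; simp [lin])).1 c)
  · exfalso
    have hrel : ∀ x, lin (v i) (fun c => qq p v i m n * st i c) x
       + lin (v j) (fun c => qq p v j m n * st j c) x = 0 := by
      intro x
      have := sum_qq p v (fun i => lin (v i) (st i)) hsum m n x
      have hij : i ≠ j := by simp at hnd; tauto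
      rw [← Finset.sum_subset (Finset.subset_univ {i, j}), Finset.sum_pair hij] at this
      · simp only [lin] at this ⊢; linear_combination this
      · intro k _ hk
        by_cases hkm : k = m
        · subst hkm; rw [qq_self]; ring
        by_cases hkn : k = n
        · subst hkn; rw [qq_self' _ _ hpv]; ring
        have : ∀ c, st k c = 0 := by
          have := h k (by simp at hk ⊢; tauto); push Not at this; exact this
        simp [lin, this]
    have hij : i ≠ j := by simp at hnd; tauto
    obtain ⟨h1, h2⟩ := lin_eq_zero _ _ (hD i j hij) _ _ hrel
    obtain ⟨c, hc⟩ := hi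
    obtain ⟨d, hd⟩ := hj
    rcases hQ i j m n hnd hm hn with hq | hq
    · exact (mul_ne_zero hq hc) (h1 c)
    · exact (mul_ne_zero hq hd) (h2 d)
  · by_contra hcon
    push Not at hcon
    have hA : ∀ l, l ∈ [i,j,k] → dt (NN v l m n) ![st m 0 * st n 0, st m 0 * st n 1, st m 1 * st n 0, st m 1 * st n 1] = 0 := by
      intro l hl
      rw [← d4_NN]
      have hS := hcon l m n (by simp at hnd hl ⊢; rcases hl with rfl | rfl | rfl <;> tauto)
      have e : ∀ w, dt (cr (lin (v l) (st l)) (lin (v m) (st m)) (lin (v n) (st n))) w = 0 := by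
        intro w; simp [dt, hS]
      have e1 := e (v l 1)
      have e0 := e (v l 0)
      rw [S_b] at e1
      rw [S_a, neg_eq_zero] at e0
      obtain ⟨c, hc⟩ := h l (by simp at hl ⊢; tauto)
      fin_cases c
      · exact (mul_eq_zero.1 e1).resolve_left hc
      · exact (mul_eq_zero.1 e0).resolve_left hc
    have hk := c5_kill (NN v i m n) (NN v j m n) (NN v k m n) _ (hA i (by simp)) (hA j (by simp)) (hA k (by simp))
      (by simp; ring) (h5 m n i j k hnd)
    obtain ⟨c, hc⟩ := h m (by simp)
    obtain ⟨d, hd⟩ := h n (by simp)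
    have := mul_ne_zero hc hd
    have h0 := hk 0
    have h1 := hk 1
    have h2 := hk 2
    have h3 := hk 3
    simp at h0 h1 h2 h3
    fin_cases c <;> fin_cases d <;> simp_all
end loc
end Todd
end

section
namespace Todd
section norm
variable {B : Type*} [CommRing B] {B' : Type*} [CommRing B']

theorem qq_map (f : B →+* B') (p : Fin 6 → Fin 4 → B) (v : Fin 6 → Fin 2 → Fin 4 → B) (i m n : Fin 6) :
    f (qq p v i m n) = qq (fun i k => f (p i k)) (fun i c k => f (v i c k)) i m n := by
  simp [qq, dt]

theorem lin_map (f : B →+* B') (v : Fin 2 → Fin 4 → B) (t : Fin 2 → B) (k : Fin 4) :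
    f (lin v t k) = lin (fun c k => f (v c k)) (fun c => f (t c)) k := by
  simp [lin]

theorem cr_map' (f : B →+* B') (a b c : Fin 4 → B) (k : Fin 4) :
    f (cr a b c k) = cr (fun k => f (a k)) (fun k => f (b k)) (fun k => f (c k)) k := by
  fin_cases k <;> simp [cr]

theorem d4_map' (f : B →+* B') (a b c d : Fin 4 → B) :
    f (d4 a b c d) = d4 (fun k => f (a k)) (fun k => f (b k)) (fun k => f (c k)) (fun k => f (d k)) := by
  simp [d4]

theorem NN_map (f : B →+* B') (v : Fin 6 → Fin 2 → Fin 4 → B) (i m n : Fin 6) (k : Fin 4) :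
    f (NN v i m n k) = NN (fun i c k => f (v i c k)) i m n k := by
  fin_cases k <;> simp [NN, d4_map']

theorem c5_map (f : B →+* B') (v : Fin 6 → Fin 2 → Fin 4 → B) (m n i j k : Fin 6) :
    f (c5 v m n i j k) = c5 (fun i c k => f (v i c k)) m n i j k := by
  simp [c5, cr_map', NN_map]

theorem cramer_dual (T a b c d : Fin 4 → B) (x : Fin 4) :
   d4 a b c d * T x = dt T a * d4 (Pi.single x 1) b c d + dt T b * d4 a (Pi.single x 1) c d
     + dt T c * d4 a b (Pi.single x 1) d + dt T d * d4 a b c (Pi.single x 1) := by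
  fin_cases x <;> simp [d4, dt, Pi.single_apply] <;> ring

theorem comb3 : ∀ i j k o : Fin 6, [i,j,k].Nodup → ∃ l m n : Fin 6, [i,j,k,l,m,n].Nodup ∧ m ≠ o ∧ n ≠ o := by
  decide +kernel
theorem comb3' : ∀ l m n : Fin 6, [l,m,n].Nodup → ∃ i j k : Fin 6, [i,j,k,l,m,n].Nodup := by
  decide +kernel
theorem comb4 : ∀ o : Fin 6, ∃ i j m n : Fin 6, [i,j,m,n].Nodup ∧ m ≠ o ∧ n ≠ o := by
  decide +kernel

theorem mem_six {i j k l m n : Fin 6} (h : [i,j,k,l,m,n].Nodup) (o : Fin 6) : o ∈ [i,j,k,l,m,n] := by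
  have := (List.toFinset_card_of_nodup h)
  have h2 : ([i,j,k,l,m,n] : List (Fin 6)).toFinset = Finset.univ :=
    (Finset.card_eq_iff_eq_univ _).1 (by rw [this]; rfl)
  rw [← List.mem_toFinset, h2]; simp

theorem wsum {i j k l m n : Fin 6} (h : [i,j,k,l,m,n].Nodup) (o : Fin 6) (hm : m ≠ o) (hn : n ≠ o) (u : ℕ) :
   (if i = o then u else 2 * u) + (if j = o then u else 2 * u) + (if k = o then u else 2 * u)
     = 5 * u + if l = o then u else 0 := by
  have := mem_six h o
  simp only [List.nodup_cons, List.mem_cons, not_or] at h this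
  by_cases h1 : i = o <;> by_cases h2 : j = o <;> by_cases h3 : k = o <;> by_cases h4 : l = o <;>
    simp only [h1, h2, h3, h4, if_true, if_false] <;> first | (exfalso; simp_all; done) | (exfalso; subst_vars; tauto) | (exfalso; simp only [eq_comm] at *; tauto) | omega

theorem lin_smul (v : Fin 2 → Fin 4 → B) (t : Fin 2 → B) (a : B) (k : Fin 4) :
   lin v (fun c => a * t c) k = a * lin v t k := by simp [lin]; ring

theorem cr_smul3 (a b c : B) (x y z : Fin 4 → B) (k : Fin 4) :
   cr (fun k => a * x k) (fun k => b * y k) (fun k => c * z k) k = a * b * c * cr x y z k := by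
  fin_cases k <;> simp [cr] <;> ring

theorem norm_claim [IsDomain B] [UniqueFactorizationMonoid B] (ϖ : B) (hϖ : Prime ϖ)
    (v : Fin 6 → Fin 2 → Fin 4 → B) (p : Fin 6 → Fin 4 → B) (st : Fin 6 → Fin 2 → B) (o : Fin 6) (u : ℕ)
    (T : Fin 4 → B) (E : Fin 6 → B)
    (hD : ∀ i j, i ≠ j → ¬ ϖ ∣ d4 (v i 0) (v i 1) (v j 0) (v j 1))
    (h5 : ∀ m n i j k, [m,n,i,j,k].Nodup → ¬ ϖ ∣ c5 v m n i j k)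
    (hpv : ∀ i c, dt (p i) (v i c) = 0) (hp0 : ∀ i, ∃ k, ¬ ϖ ∣ p i k)
    (hst : ∀ i c, ϖ ^ (if i = o then u else 2 * u) ∣ st i c)
    (hsum : ∀ k l, ∑ i, lin (v i) (st i) k * (ϖ ^ (if i = o then u else 0) * p i l) = 0)
    (hne : ∃ i c, st i c ≠ 0)
    (hQ : ∀ i j m n, [i,j,m,n].Nodup → m ≠ o → n ≠ o → ¬ ϖ ∣ qq p v i m n ∨ ¬ ϖ ∣ qq p v j m n)
    (hT : ∀ i j k l m n, [i,j,k,l,m,n].Nodup → m ≠ o → n ≠ o → ∃ ε : B, IsUnit ε ∧ ∀ x,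
       ϖ ^ (if l = o then u else 0) * qq p v l m n * T x =
         ε * cr (lin (v i) (st i)) (lin (v j) (st j)) (lin (v k) (st k)) x)
    (hE : ∀ j, ∃ ε : B, dt T (v j 0) = ε * (E j * st j 1) ∧ dt T (v j 1) = - (ε * (E j * st j 0)))
    (κ : Fin 6 → ℕ) (hκ : ∀ j, ϖ ^ κ j ∣ E j) (a : ℕ) (ha : 4 ≤ a) (F : (Fin 4 → B) → B)
    (hF1 : ∀ c Y, F (fun k => c * Y k) = c ^ a * F Y)
    (hF2 : ∀ j d Y, d ∣ dt Y (v j 0) → d ∣ dt Y (v j 1) → d ∣ F Y) :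
    ϖ ^ (u * (5 * a - 19) + ∑ j, κ j) ∣ F T := by
  set w : Fin 6 → ℕ := fun i => if i = o then u else 2 * u with hw
  set uu : Fin 6 → ℕ := fun i => if i = o then u else 0 with huu
  have hw0 : ∀ i, w i + uu i = 2 * u := by intro i; simp only [hw, huu]; split_ifs <;> omega
  choose st' hst' using hst
  -- normalize
  obtain ⟨r, hr, hr'⟩ : ∃ r, (∀ i c, ϖ ^ r ∣ st' i c) ∧ ¬ (∀ i c, ϖ ^ (r+1) ∣ st' i c) := by
    by_contra hcon
    push Not at hcon
    have : ∀ r i c, ϖ ^ r ∣ st' i c := by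
      intro r; induction r with
      | zero => simp
      | succ r ih => intro i c; exact hcon r ih i c
    obtain ⟨i, c, hic⟩ := hne
    have h0 : st' i c ≠ 0 := by rintro h; apply hic; rw [hst', h, mul_zero]
    obtain ⟨n, hn⟩ := FiniteMultiplicity.of_not_isUnit hϖ.not_unit h0
    exact hn (this _ i c)
  choose sr hsr using hr
  have hst2 : ∀ i, st i = fun c => ϖ ^ (w i + r) * sr i c := by
    intro i; funext c; rw [hst', hsr]; simp only [hw]; ring
  have hsr0 : ∃ i c, ¬ ϖ ∣ sr i c := by
    by_contra hcon; push Not at hcon; apply hr'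
    intro i c; rw [hsr, pow_succ]; exact mul_dvd_mul_left _ (hcon i c)
  have hpow : ∀ n, ϖ ^ n ≠ 0 := fun n => pow_ne_zero _ hϖ.ne_zero
  have hlin : ∀ i, lin (v i) (st i) = fun k => ϖ ^ (w i + r) * lin (v i) (sr i) k := by
    intro i; funext k; rw [hst2, lin_smul]
  have hsum2 : ∀ k l, ∑ i, lin (v i) (sr i) k * p i l = 0 := by
    intro k l
    apply mul_left_cancel₀ (hpow (2 * u + r))
    rw [mul_zero, ← hsum k l, Finset.mul_sum]
    apply Finset.sum_congr rfl
    intro i _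
    rw [hlin, ← hw0 i]; simp only [huu]; ring
  have hS : ∀ i j k x, cr (lin (v i) (st i)) (lin (v j) (st j)) (lin (v k) (st k)) x
     = ϖ ^ (w i + w j + w k + 3 * r) * cr (lin (v i) (sr i)) (lin (v j) (sr j)) (lin (v k) (sr k)) x := by
    intro i j k x
    rw [hlin i, hlin j, hlin k, cr_smul3]; ring
  have hT2 : ∀ i j k l m n, [i,j,k,l,m,n].Nodup → m ≠ o → n ≠ o → ∃ ε : B, IsUnit ε ∧ ∀ x,
       qq p v l m n * T x =
         ε * (ϖ ^ (5 * u + 3 * r) * cr (lin (v i) (sr i)) (lin (v j) (sr j)) (lin (v k) (sr k)) x) := by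
    intro i j k l m n h hm hn
    obtain ⟨ε, hε, hh⟩ := hT i j k l m n h hm hn
    refine ⟨ε, hε, fun x => ?_⟩
    have := hh x
    rw [hS] at this
    have hws : w i + w j + w k = 5 * u + uu l := wsum h o hm hn u
    rw [hws] at this
    apply mul_left_cancel₀ (hpow (uu l))
    rw [← mul_assoc]
    simp only [huu] at this ⊢
    rw [this]; ring
  have hTdvd : ∀ x, ϖ ^ (5 * u + 3 * r) ∣ T x := by
    obtain ⟨i, j, m, n, hnd, hm, hn⟩ := comb4 o
    have : ∃ l, [l,m,n].Nodup ∧ ¬ ϖ ∣ qq p v l m n := by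
      rcases hQ i j m n hnd hm hn with h | h
      · exact ⟨i, by simp at hnd ⊢; tauto, h⟩
      · exact ⟨j, by simp at hnd ⊢; tauto, h⟩
    obtain ⟨l, hl, hq⟩ := this
    obtain ⟨i, j, k, h⟩ := comb3' l m n hl
    obtain ⟨ε, hε, hh⟩ := hT2 i j k l m n h hm hn
    intro x
    apply hϖ.pow_dvd_of_dvd_mul_left _ hq
    rw [hh x]
    exact Dvd.dvd.mul_left (Dvd.intro _ rfl) _
  choose Tr hTr using hTdvd
  -- the local lemma
  have hprime : (Ideal.span {ϖ}).IsPrime := (Ideal.span_singleton_prime hϖ.ne_zero).2 hϖ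
  let f := Ideal.Quotient.mk (Ideal.span {ϖ})
  have hf : ∀ b, f b = 0 ↔ ϖ ∣ b := fun b => by
    rw [← Ideal.mem_span_singleton]; exact Ideal.Quotient.eq_zero_iff_mem
  have hloc := local_lemma (fun i c k => f (v i c k)) (fun i k => f (p i k)) (fun i c => f (sr i c)) o
    (by intro i j hij; rw [← d4_map', Ne, hf]; exact hD i j hij)
    (by intro m n i j k h; rw [← c5_map, Ne, hf]; exact h5 m n i j k h)
    (by intro i c; have := congrArg f (hpv i c); simpa [dt] using this)
    (by intro i; obtain ⟨k, hk⟩ := hp0 i; exact ⟨k, by rw [Ne, hf]; exact hk⟩)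
    (by intro k l; have := congrArg f (hsum2 k l); simpa [lin] using this)
    (by obtain ⟨i, c, h⟩ := hsr0; exact ⟨i, c, by rw [Ne, hf]; exact h⟩)
    (by intro i j m n h hm hn; rw [← qq_map, ← qq_map, Ne, Ne, hf, hf]; exact hQ i j m n h hm hn)
  have hTr0 : ∃ x, ¬ ϖ ∣ Tr x := by
    obtain ⟨i, j, k, hnd, x, hx⟩ := hloc
    obtain ⟨l, m, n, h, hm, hn⟩ := comb3 i j k o hnd
    obtain ⟨ε, hε, hh⟩ := hT2 i j k l m n h hm hn
    refine ⟨x, fun hd => hx ?_⟩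
    have e : qq p v l m n * Tr x = ε * cr (lin (v i) (sr i)) (lin (v j) (sr j)) (lin (v k) (sr k)) x := by
      apply mul_left_cancel₀ (hpow (5 * u + 3 * r))
      have := hh x
      rw [hTr] at this
      linear_combination this
    have e2 : f (cr (lin (v i) (sr i)) (lin (v j) (sr j)) (lin (v k) (sr k)) x) = 0 := by
      rw [hf, ← hε.dvd_mul_left, ← e]; exact hd.mul_left _
    rw [cr_map'] at e2
    simp only [lin_map] at e2
    exact e2
  set e : Fin 6 → ℕ := fun j => κ j + w j + r - (5 * u + 3 * r) with he
  have hdT : ∀ y, dt T y = ϖ ^ (5 * u + 3 * r) * dt Tr y := by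
    intro y; simp only [dt, hTr]; ring
  have hed : ∀ j c, ϖ ^ e j ∣ dt Tr (v j c) := by
    intro j c
    by_cases hlt : 5 * u + 3 * r ≤ κ j + w j + r
    · have hh : ϖ ^ (κ j + w j + r) ∣ dt T (v j c) := by
        obtain ⟨ε, h0, h1⟩ := hE j
        have key : ∀ c, ϖ ^ (κ j + w j + r) ∣ E j * st j c := by
          intro c; rw [hst2, add_assoc, pow_add]
          exact mul_dvd_mul (hκ j) (Dvd.intro _ rfl)
        fin_cases c
        · simp only [Fin.zero_eta]; rw [h0]; exact (key 1).mul_left _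
        · simp only [Fin.mk_one]; rw [h1, dvd_neg]; exact (key 0).mul_left _
      rw [hdT, show κ j + w j + r = (5 * u + 3 * r) + e j by simp only [he]; omega, pow_add] at hh
      exact (mul_dvd_mul_iff_left (hpow _)).1 hh
    · have : e j = 0 := by simp only [he]; omega
      rw [this]; simp
  have hFT : F T = ϖ ^ ((5 * u + 3 * r) * a) * F Tr := by
    rw [show T = fun k => ϖ ^ (5 * u + 3 * r) * Tr k from funext hTr, hF1, pow_mul]
  have huniq : ∀ j k, j ≠ k → e j ≠ 0 → e k = 0 := by
    intro j k hjk hj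
    by_contra hk
    obtain ⟨x, hx⟩ := hTr0
    have h1 : ∀ c, ϖ ∣ dt Tr (v j c) := fun c => (dvd_pow_self ϖ hj).trans (hed j c)
    have h2 : ∀ c, ϖ ∣ dt Tr (v k c) := fun c => (dvd_pow_self ϖ hk).trans (hed k c)
    have h3 := cramer_dual Tr (v j 0) (v j 1) (v k 0) (v k 1) x
    have h4 : ϖ ∣ d4 (v j 0) (v j 1) (v k 0) (v k 1) * Tr x := by
      rw [h3]
      exact dvd_add (dvd_add (dvd_add ((h1 0).mul_right _) ((h1 1).mul_right _)) ((h2 0).mul_right _)) ((h2 1).mul_right _)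
    exact (hϖ.dvd_or_dvd h4).elim (hD j k hjk) hx
  have hFe : ϖ ^ (∑ j, e j) ∣ F Tr := by
    by_cases hall : ∀ j, e j = 0
    · simp [hall]
    · push Not at hall
      obtain ⟨j, hj⟩ := hall
      rw [Finset.sum_eq_single j (fun k _ hk => huniq j k (Ne.symm hk) hj) (by simp)]
      exact hF2 j _ _ (hed j 0) (hed j 1)
  rw [hFT]
  refine dvd_trans ?_ (mul_dvd_mul_left _ hFe)
  rw [← pow_add]
  apply pow_dvd_pow
  have h1 : ∑ j, (κ j + w j + r) ≤ ∑ j, ((5 * u + 3 * r) + e j) :=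
    Finset.sum_le_sum fun j _ => by simp only [he]; omega
  have h2 : ∑ j, w j = 11 * u := by
    have : ∀ j, w j = 2 * u - if j = o then u else 0 := by
      intro j; simp only [hw]; split_ifs <;> omega
    have h3 : ∑ j, w j + ∑ j, uu j = 12 * u := by
      rw [← Finset.sum_add_distrib]; simp [hw0]; ring
    have h4 : ∑ j, uu j = u := by simp [huu]
    omega
  simp only [Finset.sum_add_distrib, h2, Finset.sum_const, Finset.card_univ, Fintype.card_fin, smul_eq_mul] at h1
  obtain ⟨b, rfl⟩ := Nat.exists_eq_add_of_le ha
  rw [show 5 * (4 + b) - 19 = 1 + 5 * b by omega]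
  nlinarith [Nat.zero_le (r * b)]
end norm
end Todd
end

section
namespace Todd
section tt
variable {B : Type*} [CommRing B]

theorem cr_swap12 (a b c : Fin 4 → B) (x : Fin 4) : cr b a c x = - cr a b c x := by
  fin_cases x <;> simp [cr] <;> ring
theorem cr_swap23 (a b c : Fin 4 → B) (x : Fin 4) : cr a c b x = - cr a b c x := by
  fin_cases x <;> simp [cr] <;> ring

theorem sum_six {i j k l m n : Fin 6} (h : [i,j,k,l,m,n].Nodup) (g : Fin 6 → B) :
    ∑ t, g t = g i + g j + g k + g l + g m + g n := by
  have h2 : ([i,j,k,l,m,n] : List (Fin 6)).toFinset = Finset.univ :=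
    (Finset.card_eq_iff_eq_univ _).1 (by rw [List.toFinset_card_of_nodup h]; rfl)
  rw [← h2, List.sum_toFinset _ h]; simp; ring

theorem rel4 (p : Fin 6 → Fin 4 → B) (v : Fin 6 → Fin 2 → Fin 4 → B) (s : Fin 6 → Fin 4 → B)
    (hpv : ∀ i c, dt (p i) (v i c) = 0)
    (hsum : ∀ k l, ∑ i, s i k * p i l = 0) {i j k l m n : Fin 6} (h : [i,j,k,l,m,n].Nodup) (x : Fin 4) :
    qq p v i m n * s i x + qq p v j m n * s j x + qq p v k m n * s k x + qq p v l m n * s l x = 0 := by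
  have := sum_qq p v s hsum m n x
  rw [sum_six h, qq_self, qq_self' _ _ hpv] at this
  linear_combination this

theorem cr_lin4 (a b c d : B) (x y z w : Fin 4 → B) (h : ∀ t, a * x t + b * y t + c * z t + d * w t = 0) (t : Fin 4) :
    a * cr x y z t = - (d * cr w y z t) := by
  have h0 := h 0
  have h1 := h 1
  have h2 := h 2
  have h3 := h 3
  fin_cases t <;> simp [cr]
  · linear_combination (-(y 2 * z 3 - y 3 * z 2)) * h1 + (y 1 * z 3 - y 3 * z 1) * h2 - (y 1 * z 2 - y 2 * z 1) * h3
  · linear_combination ((y 2 * z 3 - y 3 * z 2)) * h0 - (y 0 * z 3 - y 3 * z 0) * h2 + (y 0 * z 2 - y 2 * z 0) * h3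
  · linear_combination (-(y 1 * z 3 - y 3 * z 1)) * h0 + (y 0 * z 3 - y 3 * z 0) * h1 - (y 0 * z 1 - y 1 * z 0) * h3
  · linear_combination ((y 1 * z 2 - y 2 * z 1)) * h0 - (y 0 * z 2 - y 2 * z 0) * h1 + (y 0 * z 1 - y 1 * z 0) * h2

theorem comb5 : ∀ j : Fin 6, ∃ i k l m n : Fin 6, [i,j,k,l,m,n].Nodup := by decide +kernel

theorem perm_ind (P : Equiv.Perm (Fin 6) → Prop) (h1 : P 1)
    (hs : ∀ σ (i : Fin 5), P σ → P (σ * Equiv.swap i.castSucc i.succ)) (σ) : P σ := by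
  have hσ : σ ∈ Submonoid.closure (Set.range fun i : Fin 5 => Equiv.swap i.castSucc i.succ) := by
    rw [Equiv.Perm.mclosure_swap_castSucc_succ]; trivial
  induction hσ using Submonoid.closure_induction_right with
  | one => exact h1
  | mul_right x hx y hy ih =>
    obtain ⟨i, rfl⟩ := hy
    exact hs x i ih

theorem nodup_perm {i j k l m n : Fin 6} (h : [i,j,k,l,m,n].Nodup) :
    ∃ σ : Equiv.Perm (Fin 6), σ 0 = i ∧ σ 1 = j ∧ σ 2 = k ∧ σ 3 = l ∧ σ 4 = m ∧ σ 5 = n := by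
  have hb : Function.Bijective (![i,j,k,l,m,n] : Fin 6 → Fin 6) := by
    rw [← Finite.injective_iff_bijective, ← List.nodup_ofFn]
    simpa using h
  exact ⟨Equiv.ofBijective _ hb, rfl, rfl, rfl, rfl, rfl, rfl⟩

theorem perm_nodup (σ : Equiv.Perm (Fin 6)) : [σ 0, σ 1, σ 2, σ 3, σ 4, σ 5].Nodup := by
  have := List.nodup_ofFn.2 σ.injective
  simpa using this

theorem exists_T [IsDomain B] [UniqueFactorizationMonoid B]
    (v : Fin 6 → Fin 2 → Fin 4 → B) (p : Fin 6 → Fin 4 → B) (st : Fin 6 → Fin 2 → B)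
    (hq23 : ∀ i m n, qq p v i n m = - qq p v i m n)
    (hpv : ∀ i c, dt (p i) (v i c) = 0)
    (hsum : ∀ k l, ∑ i, lin (v i) (st i) k * p i l = 0)
    (hQ0 : ∀ i m n, [i,m,n].Nodup → qq p v i m n ≠ 0)
    (hcop : ∀ i l m n, [i,l,m,n].Nodup → IsRelPrime (qq p v i m n) (qq p v l m n)) :
    ∃ (T : Fin 4 → B) (E : Fin 6 → B),
      (∀ i j k l m n, [i,j,k,l,m,n].Nodup → ∃ ε : B, (ε = 1 ∨ ε = -1) ∧ ∀ x,
        qq p v l m n * T x = ε * cr (lin (v i) (st i)) (lin (v j) (st j)) (lin (v k) (st k)) x) ∧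
      (∀ j, ∃ ε : B, dt T (v j 0) = ε * (E j * st j 1) ∧ dt T (v j 1) = - (ε * (E j * st j 0))) ∧
      (∀ j, ∃ i k l m n, [i,j,k,l,m,n].Nodup ∧ qq p v l m n * E j =
         d4 (v j 0) (v j 1) (lin (v i) (st i)) (lin (v k) (st k))) := by
  set s : Fin 6 → Fin 4 → B := fun i => lin (v i) (st i) with hs
  have hrel : ∀ {i j k l m n : Fin 6}, [i,j,k,l,m,n].Nodup → ∀ x,
      qq p v i m n * s i x + qq p v j m n * s j x + qq p v k m n * s k x + qq p v l m n * s l x = 0 :=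
    fun h x => rel4 p v s hpv hsum h x
  have hrelS : ∀ {i j k l m n : Fin 6}, [i,j,k,l,m,n].Nodup → ∀ x,
      qq p v i m n * cr (s i) (s j) (s k) x = - (qq p v l m n * cr (s l) (s j) (s k) x) :=
    fun h x => cr_lin4 _ _ _ _ _ _ _ _ (hrel h) x
  have hT : ∀ x, ∃ t, cr (s 0) (s 1) (s 2) x = qq p v 3 4 5 * t := by
    intro x
    have h := hrelS (i := 0) (j := 1) (k := 2) (l := 3) (m := 4) (n := 5) (by decide) x
    exact (hcop 3 0 4 5 (by decide)).dvd_of_dvd_mul_left ⟨- cr (s 3) (s 1) (s 2) x, by rw [h]; ring⟩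
  choose T hT using hT
  let P : Fin 6 → Fin 6 → Fin 6 → Fin 6 → Fin 6 → Fin 6 → Prop := fun i j k l m n =>
    ∃ ε : B, (ε = 1 ∨ ε = -1) ∧ ∀ x, qq p v l m n * T x = ε * cr (s i) (s j) (s k) x
  have hneg : ∀ ε : B, (ε = 1 ∨ ε = -1) → (-ε = 1 ∨ -ε = -1) := by
    rintro ε (rfl | rfl) <;> simp
  have hP : ∀ σ : Equiv.Perm (Fin 6), P (σ 0) (σ 1) (σ 2) (σ 3) (σ 4) (σ 5) := by
    apply perm_ind
    · exact ⟨1, Or.inl rfl, fun x => by simp only [Equiv.Perm.one_apply]; rw [hT]; ring⟩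
    · rintro σ i ⟨ε, hε, h⟩
      have hnd := perm_nodup σ
      have hnd2 := perm_nodup (σ * Equiv.swap i.castSucc i.succ)
      refine ⟨-ε, hneg ε hε, ?_⟩
      have hsw : ∀ t, (σ * Equiv.swap i.castSucc i.succ) t = σ (Equiv.swap i.castSucc i.succ t) := fun t => rfl
      simp only [hsw] at hnd2 ⊢
      fin_cases i <;> intro x
      · simp only [show ∀ t : Fin 6, (Equiv.swap (Fin.castSucc (0 : Fin 5)) (Fin.succ (0 : Fin 5))) t = ![1,0,2,3,4,5] t by decide, Fin.zero_eta]
        simp only [Matrix.cons_val]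
        rw [h, cr_swap12]; ring
      · simp only [show ∀ t : Fin 6, (Equiv.swap (Fin.castSucc (1 : Fin 5)) (Fin.succ (1 : Fin 5))) t = ![0,2,1,3,4,5] t by decide, Fin.mk_one]
        simp only [Matrix.cons_val]
        rw [h, cr_swap23]; ring
      · have e : ∀ t : Fin 6, (Equiv.swap (Fin.castSucc (2 : Fin 5)) (Fin.succ (2 : Fin 5))) t = ![0,1,3,2,4,5] t := by decide
        simp only [Fin.reduceFinMk, e, Matrix.cons_val] at hnd2 ⊢
        apply mul_left_cancel₀ (hQ0 (σ 3) (σ 4) (σ 5) (by simp))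
        have h1 := hrelS (i := σ 2) (j := σ 0) (k := σ 1) (l := σ 3) (m := σ 4) (n := σ 5) (by simp) x
        have e1 : cr (s (σ 2)) (s (σ 0)) (s (σ 1)) x = cr (s (σ 0)) (s (σ 1)) (s (σ 2)) x := by
          rw [cr_swap12, cr_swap23]; ring
        have e2 : cr (s (σ 3)) (s (σ 0)) (s (σ 1)) x = cr (s (σ 0)) (s (σ 1)) (s (σ 3)) x := by
          rw [cr_swap12, cr_swap23]; ring
        rw [e1, e2] at h1
        linear_combination qq p v (σ 2) (σ 4) (σ 5) * h x + ε * h1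
      · have e : ∀ t : Fin 6, (Equiv.swap (Fin.castSucc (3 : Fin 5)) (Fin.succ (3 : Fin 5))) t = ![0,1,2,4,3,5] t := by decide
        simp only [Fin.reduceFinMk, e, Matrix.cons_val]
        rw [qq_swap12, neg_mul, h]; ring
      · have e : ∀ t : Fin 6, (Equiv.swap (Fin.castSucc (4 : Fin 5)) (Fin.succ (4 : Fin 5))) t = ![0,1,2,3,5,4] t := by decide
        simp only [Fin.reduceFinMk, e, Matrix.cons_val]
        rw [hq23, neg_mul, h]; ring
  have hP' : ∀ i j k l m n, [i,j,k,l,m,n].Nodup → P i j k l m n := by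
    intro i j k l m n h
    obtain ⟨σ, rfl, rfl, rfl, rfl, rfl, rfl⟩ := nodup_perm h
    exact hP σ
  have hE : ∀ j, ∃ e, ∃ i k l m n, [i,j,k,l,m,n].Nodup ∧ d4 (v j 0) (v j 1) (s i) (s k) = qq p v l m n * e := by
    intro j
    obtain ⟨i, k, l, m, n, h⟩ := comb5 j
    have hr := hrel h
    have h1 : qq p v i m n * d4 (v j 0) (v j 1) (s i) (s k) = - (qq p v l m n * d4 (v j 0) (v j 1) (s l) (s k)) := by
      have e : d4 (v j 0) (v j 1) (fun x => qq p v i m n * s i x + qq p v j m n * s j x + qq p v k m n * s k x + qq p v l m n * s l x) (s k)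
        = qq p v i m n * d4 (v j 0) (v j 1) (s i) (s k) + qq p v l m n * d4 (v j 0) (v j 1) (s l) (s k) := by
        simp only [d4, hs, lin]; ring
      rw [show (fun x => qq p v i m n * s i x + qq p v j m n * s j x + qq p v k m n * s k x + qq p v l m n * s l x) = fun _ => 0 from funext hr] at e
      have e0 : d4 (v j 0) (v j 1) (fun _ => 0) (s k) = 0 := by simp [d4]
      rw [e0] at e
      linear_combination -e
    have h2 : qq p v l m n ∣ d4 (v j 0) (v j 1) (s i) (s k) :=
      (hcop l i m n (by simp at h ⊢; simp only [eq_comm] at *; tauto)).dvd_of_dvd_mul_left ⟨- d4 (v j 0) (v j 1) (s l) (s k), by rw [h1]; ring⟩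
    obtain ⟨e, he⟩ := h2
    exact ⟨e, i, k, l, m, n, h, he⟩
  choose E hE using hE
  refine ⟨T, E, hP', ?_, ?_⟩
  · intro j
    obtain ⟨i, k, l, m, n, h, he⟩ := hE j
    obtain ⟨ε, hε, hT⟩ := hP' j i k l m n (by simp at h ⊢; simp only [eq_comm] at *; tauto)
    have hd : ∀ w, qq p v l m n * dt T w = ε * dt (cr (s j) (s i) (s k)) w := by
      intro w; simp only [dt]
      linear_combination w 0 * hT 0 + w 1 * hT 1 + w 2 * hT 2 + w 3 * hT 3
    have hq := hQ0 l m n (by simp at h ⊢; tauto)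
    refine ⟨-ε, mul_left_cancel₀ hq ?_, mul_left_cancel₀ hq ?_⟩
    · rw [hd, hs]; simp only []; rw [S_a]
      change ε * -(st j 1 * d4 (v j 0) (v j 1) (s i) (s k)) = _
      rw [he]; ring
    · rw [hd, hs]; simp only []; rw [S_b]
      change ε * (st j 0 * d4 (v j 0) (v j 1) (s i) (s k)) = _
      rw [he]; ring
  · intro j
    obtain ⟨i, k, l, m, n, h, he⟩ := hE j
    exact ⟨i, k, l, m, n, h, he.symm⟩
end tt
end Todd
end

section
namespace Todd

def cc (a : C4) : Fin 4 → R3 := fun k => C (a k)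
def vC (v : Fin 6 → Fin 2 → C4) : Fin 6 → Fin 2 → Fin 4 → R3 := fun i c => cc (v i c)
def XX : Fin 4 → R3 := fun k => X k
def lf (c : C4) : R3 := dt (cc c) XX
/-- the generic `p_i` -/
def pp (v : Fin 6 → Fin 2 → C4) : Fin 6 → Fin 4 → R3 := pv (vC v) XX

theorem lf_irr (c : C4) (hc : c ≠ 0) : Irreducible (lf c) := by
  have h : lf c = sumSMulX (R := ℂ) (Finsupp.equivFunOnFinite.symm c) := by
    simp only [lf, dt, cc, XX, sumSMulX, Finsupp.linearCombination_apply]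
    rw [Finsupp.sum_fintype _ _ (by simp)]
    simp [Fin.sum_univ_four, MvPolynomial.smul_eq_C_mul]
  obtain ⟨k, hk⟩ := Function.ne_iff.1 hc
  rw [h]
  apply irreducible_sumSMulX
  · exact ⟨k, by simpa using hk⟩
  · intro r hr
    have := hr k
    rw [isUnit_iff_ne_zero]
    rintro rfl
    rw [zero_dvd_iff] at this
    exact hk this

theorem eval_lf (c p : C4) : eval p (lf c) = dt c p := by
  simp [lf, dt, cc, XX]

theorem eval_zero_of_dvd {f G : R3} (hf : Prime f) {c : C4} (hc : c ≠ 0) (h1 : f ∣ lf c) (h2 : f ∣ G)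
    (p : C4) (hp : dt c p = 0) : eval p G = 0 := by
  have h3 : lf c ∣ f := (hf.irreducible.dvd_symm (lf_irr c hc) h1)
  obtain ⟨g, hg⟩ := h3.trans h2
  rw [hg, map_mul, eval_lf, hp, zero_mul]

section id
variable {B : Type*} [CommRing B]
theorem qq_yz (v : Fin 6 → Fin 2 → Fin 4 → B) (y z : Fin 2 → B) (i m n : Fin 6) :
    qq (pv v (fun k => lin (v m) y k + lin (v n) z k)) v i m n
     = - (d4 (v m 0) (v m 1) (v n 0) (v n 1) * (y 0 * z 0 * NN v i m n 0 + y 0 * z 1 * NN v i m n 1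
       + y 1 * z 0 * NN v i m n 2 + y 1 * z 1 * NN v i m n 3)) := by
  have e1 : dt (pv v (fun k => lin (v m) y k + lin (v n) z k) m) (v n 0)
     = - (z 1 * d4 (v m 0) (v m 1) (v n 0) (v n 1)) := by
    simp only [pv, dt_cr]; simp only [d4, lin]; ring
  have e2 : dt (pv v (fun k => lin (v m) y k + lin (v n) z k) m) (v n 1)
     = (z 0 * d4 (v m 0) (v m 1) (v n 0) (v n 1)) := by
    simp only [pv, dt_cr]; simp only [d4, lin]; ring
  have e3 : dt (pv v (fun k => lin (v m) y k + lin (v n) z k) i) (v n 0)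
     = y 0 * NN v i m n 0 + y 1 * NN v i m n 2 - z 1 * d4 (v i 0) (v i 1) (v n 0) (v n 1) := by
    simp only [pv, dt_cr]; simp [NN]; simp only [d4, lin]; ring
  have e4 : dt (pv v (fun k => lin (v m) y k + lin (v n) z k) i) (v n 1)
     = y 0 * NN v i m n 1 + y 1 * NN v i m n 3 + z 0 * d4 (v i 0) (v i 1) (v n 0) (v n 1) := by
    simp only [pv, dt_cr]; simp [NN]; simp only [d4, lin]; ring
  simp only [qq, e1, e2, e3, e4]; ring

theorem qq_scale (v : Fin 6 → Fin 2 → Fin 4 → B) (x : Fin 4 → B) (c : B) (i m n : Fin 6) :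
    qq (pv v (fun k => c * x k)) v i m n = c ^ 2 * qq (pv v x) v i m n := by
  simp only [qq, pv, dt_cr, d4]; ring

theorem cramer (x a b c d : Fin 4 → B) (k : Fin 4) :
   d4 a b c d * x k = d4 x b c d * a k + d4 a x c d * b k + d4 a b x d * c k + d4 a b c x * d k := by
  fin_cases k <;> simp [d4] <;> ring

theorem NN_det (v : Fin 6 → Fin 2 → Fin 4 → B) (i m n : Fin 6) :
    NN v i m n 0 * NN v i m n 3 - NN v i m n 1 * NN v i m n 2
     = d4 (v i 0) (v i 1) (v m 0) (v m 1) * d4 (v i 0) (v i 1) (v n 0) (v n 1) := by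
  simp [NN, d4]; ring

theorem NN_c4 (v : Fin 6 → Fin 2 → Fin 4 → B) (i l m n : Fin 6) :
    NN v i m n 0 * NN v l m n 2 - NN v i m n 2 * NN v l m n 0 = qq (pv v (v n 0)) v l i m := by
  have e : ∀ a b c d : Fin 4 → B, d4 a b c d = - d4 a b d c := by intros; simp only [d4]; ring
  simp only [qq, pv, dt_cr, NN, Matrix.cons_val]
  rw [e _ _ (v m 0), e _ _ (v m 1), e _ _ (v m 0), e _ _ (v m 1)]; ring

theorem pv_map {B' : Type*} [CommRing B'] (f : B →+* B') (v : Fin 6 → Fin 2 → Fin 4 → B) (x : Fin 4 → B) :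
   (fun i k => f (pv v x i k)) = pv (fun i c k => f (v i c k)) (fun k => f (x k)) := by
  funext i k; simp only [pv]; rw [cr_map']

theorem pv_v (v : Fin 6 → Fin 2 → Fin 4 → B) (x : Fin 4 → B) (i : Fin 6) (c : Fin 2) :
    dt (pv v x i) (v i c) = 0 := by
  fin_cases c <;> simp [pv, dt_cr, d4] <;> ring

theorem d4_self3 (a b c : Fin 4 → B) : d4 a b c c = 0 ∧ d4 a b c a = 0 ∧ d4 a b c b = 0 := by
  refine ⟨?_, ?_, ?_⟩ <;> simp only [d4] <;> ring
end id

theorem eval_qq (v : Fin 6 → Fin 2 → C4) (x : C4) (i m n : Fin 6) :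
    eval x (qq (pp v) (vC v) i m n) = qq (pv v x) v i m n := by
  rw [qq_map (eval x)]
  unfold pp
  rw [pv_map]
  simp [vC, cc, XX]

structure Gen (v : Fin 6 → Fin 2 → C4) : Prop where
  hD : ∀ i j, i ≠ j → d4 (v i 0) (v i 1) (v j 0) (v j 1) ≠ 0
  h4 : ∀ i j k l, [i,j,k,l].Nodup → qq (pv v (v l 0)) v i j k ≠ 0
  h5 : ∀ m n i j k, [m,n,i,j,k].Nodup → c5 v m n i j k ≠ 0

theorem comb6 : ∀ i m n : Fin 6, ∃ l : Fin 6, [i,m,n].Nodup → [i,m,n,l].Nodup := by decide +kernel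

theorem Gen.hQ0 {v} (h : Gen v) (i m n : Fin 6) (hn : [i,m,n].Nodup) : qq (pp v) (vC v) i m n ≠ 0 := by
  obtain ⟨l, hl⟩ := comb6 i m n
  intro h0
  have := eval_qq v (v l 0) i m n
  rw [h0, map_zero] at this
  exact h.h4 i m n l (hl hn) this.symm

theorem Gen.cop {v} (h : Gen v) (i l m n : Fin 6) (hn : [i,l,m,n].Nodup) (f : R3) (hf : Prime f)
    (h1 : f ∣ qq (pp v) (vC v) i m n) (h2 : f ∣ qq (pp v) (vC v) l m n) : False := by
  have hmn : m ≠ n := by simp at hn; tauto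
  have him : i ≠ m := by simp at hn; tauto
  have hin : i ≠ n := by simp at hn; tauto
  set D := d4 (v m 0) (v m 1) (v n 0) (v n 1) with hDdef
  have hD : D ≠ 0 := h.hD m n hmn
  -- coordinates
  let c0 : C4 := fun k => - cr (v m 1) (v n 0) (v n 1) k
  let c1 : C4 := cr (v m 0) (v n 0) (v n 1)
  let c2 : C4 := fun k => - cr (v m 0) (v m 1) (v n 1) k
  let c3 : C4 := cr (v m 0) (v m 1) (v n 0)
  let y : Fin 2 → R3 := ![lf c0, lf c1]
  let z : Fin 2 → R3 := ![lf c2, lf c3]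
  have hmap : ∀ (c : C4) , lf c = dt (cc c) XX := fun _ => rfl
  have hneg : ∀ c : C4, lf (fun k => - c k) = - lf c := by
    intro c; simp [lf, dt, cc]; ring
  have hcr : ∀ a b c : C4, lf (cr a b c) = d4 (cc a) (cc b) (cc c) XX := by
    intro a b c; rw [← dt_cr, hmap]
    congr 1; funext k; exact cr_map' (C : ℂ →+* R3) a b c k
  have hx : (fun k => C D * XX k) = fun k => lin (vC v m) y k + lin (vC v n) z k := by
    funext k
    have h1 := cramer XX (vC v m 0) (vC v m 1) (vC v n 0) (vC v n 1) k
    have h2 : (C D : R3) = d4 (vC v m 0) (vC v m 1) (vC v n 0) (vC v n 1) := d4_map' (C : ℂ →+* R3) _ _ _ _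
    rw [h2, h1]
    simp only [lin, y, z, c0, c1, c2, c3, hneg, hcr, Matrix.cons_val_zero, Matrix.cons_val_one]
    have a1 : ∀ a b c d : Fin 4 → R3, d4 a b c d = - d4 b c d a := by intros; simp only [d4]; ring
    have a2 : ∀ a b c d : Fin 4 → R3, d4 a b c d = d4 a c d b := by intros; simp only [d4]; ring
    have a3 : ∀ a b c d : Fin 4 → R3, d4 a b c d = - d4 a b d c := by intros; simp only [d4]; ring
    rw [a1 XX, a2 _ XX, a3 _ _ XX]
    simp only [vC]; ring
  have hN : ∀ i k, NN (vC v) i m n k = C (NN v i m n k) := fun i k => (NN_map (C : ℂ →+* R3) v i m n k).symm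
  have hdiv : ∀ i, f ∣ qq (pp v) (vC v) i m n → f ∣ (y 0 * z 0 * C (NN v i m n 0) + y 0 * z 1 * C (NN v i m n 1)
       + y 1 * z 0 * C (NN v i m n 2) + y 1 * z 1 * C (NN v i m n 3)) := by
    intro i hi
    have e := qq_scale (vC v) XX (C D) i m n
    rw [hx, qq_yz] at e
    have h2 : (C D : R3) = d4 (vC v m 0) (vC v m 1) (vC v n 0) (vC v n 1) := d4_map' (C : ℂ →+* R3) _ _ _ _
    rw [← h2] at e
    have hCD : (C D : R3) * C D⁻¹ = 1 := by rw [← C_mul, mul_inv_cancel₀ hD, C_1]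
    simp only [hN] at e
    have : (y 0 * z 0 * C (NN v i m n 0) + y 0 * z 1 * C (NN v i m n 1)
       + y 1 * z 0 * C (NN v i m n 2) + y 1 * z 1 * C (NN v i m n 3)) = - (C D * qq (pp v) (vC v) i m n) := by
      simp only [pp]
      linear_combination (-C D⁻¹) * e - ((y 0 * z 0 * C (NN v i m n 0) + y 0 * z 1 * C (NN v i m n 1)
       + y 1 * z 0 * C (NN v i m n 2) + y 1 * z 1 * C (NN v i m n 3)) + C D * qq (pv (vC v) XX) (vC v) i m n ) * hCD
    rw [this, dvd_neg]
    exact hi.mul_left _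
  have k1 := hdiv i h1
  have k2 := hdiv l h2
  have ey : ∀ c : C4, dt c = fun p => dt c p := fun _ => rfl
  have e0m : dt c0 (v m 1) = 0 := by
    have : dt c0 (v m 1) = - dt (cr (v m 1) (v n 0) (v n 1)) (v m 1) := by simp only [c0, dt]; ring
    rw [this, dt_cr, (d4_self3 _ _ _).2.1, neg_zero]
  have e1m : dt c1 (v m 1) = D := by
    simp only [c1, dt_cr, hDdef, d4]; ring
  have e0m' : dt c0 (v m 0) = D := by
    have : dt c0 (v m 0) = - dt (cr (v m 1) (v n 0) (v n 1)) (v m 0) := by simp only [c0, dt]; ring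
    rw [this, dt_cr, hDdef]; simp only [d4]; ring
  have hc0 : c0 ≠ 0 := by
    intro h; rw [h] at e0m'; apply hD; rw [← e0m']; simp [dt]
  have e2 : ∀ w, dt c2 w = - d4 (v m 0) (v m 1) (v n 1) w := by
    intro w; rw [← dt_cr]; simp only [c2, dt]; ring
  have e3 : ∀ w, dt c3 w = d4 (v m 0) (v m 1) (v n 0) w := fun w => dt_cr _ _ _ _
  -- Delta
  let N := NN v i m n
  let M := NN v l m n
  have hΔ : f ∣ (z 0 * C (N 0) + z 1 * C (N 1)) * (z 0 * C (M 2) + z 1 * C (M 3))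
       - (z 0 * C (N 2) + z 1 * C (N 3)) * (z 0 * C (M 0) + z 1 * C (M 1)) := by
    have g0 : f ∣ y 0 * ((z 0 * C (N 0) + z 1 * C (N 1)) * (z 0 * C (M 2) + z 1 * C (M 3))
       - (z 0 * C (N 2) + z 1 * C (N 3)) * (z 0 * C (M 0) + z 1 * C (M 1))) := by
      have := dvd_sub (k1.mul_right (z 0 * C (M 2) + z 1 * C (M 3))) (k2.mul_right (z 0 * C (N 2) + z 1 * C (N 3)))
      convert this using 1
      simp only [N, M]; ring
    have g1 : f ∣ y 1 * ((z 0 * C (N 0) + z 1 * C (N 1)) * (z 0 * C (M 2) + z 1 * C (M 3))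
       - (z 0 * C (N 2) + z 1 * C (N 3)) * (z 0 * C (M 0) + z 1 * C (M 1))) := by
      have := dvd_sub (k2.mul_right (z 0 * C (N 0) + z 1 * C (N 1))) (k1.mul_right (z 0 * C (M 0) + z 1 * C (M 1)))
      convert this using 1
      simp only [N, M]; ring
    rcases hf.dvd_or_dvd g0 with h0 | h0
    · rcases hf.dvd_or_dvd g1 with h1' | h1'
      · exfalso
        have := eval_zero_of_dvd hf hc0 h0 h1' (v m 1) e0m
        simp only [y, Matrix.cons_val_one, eval_lf] at this
        rw [Matrix.cons_val_zero, eval_lf, e1m] at this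
        exact hD this
      · exact h1'
    · exact h0
  set α := N 0 * M 2 - N 2 * M 0 with hα
  have hα0 : α ≠ 0 := by
    rw [hα]; simp only [N, M]; rw [NN_c4]
    exact h.h4 l i m n (by simp at hn ⊢; simp only [eq_comm] at *; tauto)
  set β := N 0 * M 3 + N 1 * M 2 - N 2 * M 1 - N 3 * M 0 with hβ
  set γ := N 1 * M 3 - N 3 * M 1 with hγ
  obtain ⟨sq, hsq⟩ := IsAlgClosed.exists_pow_nat_eq (β ^ 2 - 4 * α * γ) (n := 2) (by norm_num)
  let r1 := (-β + sq) / (2 * α)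
  let r2 := (-β - sq) / (2 * α)
  have hsum : α * (r1 + r2) = - β := by simp only [r1, r2]; field_simp; ring
  have hprod : α * (r1 * r2) = γ := by
    simp only [r1, r2]; field_simp; linear_combination -hsq
  have hfac : (z 0 * C (N 0) + z 1 * C (N 1)) * (z 0 * C (M 2) + z 1 * C (M 3))
       - (z 0 * C (N 2) + z 1 * C (N 3)) * (z 0 * C (M 0) + z 1 * C (M 1))
       = C α * ((z 0 - C r1 * z 1) * (z 0 - C r2 * z 1)) := by
    have s1 := congrArg (C : ℂ → R3) hsum
    have s2 := congrArg (C : ℂ → R3) hprod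
    rw [hβ] at s1
    rw [hγ] at s2
    have s3 := congrArg (C : ℂ → R3) hα
    simp only [C_mul, C_add, C_neg, C_sub] at s1 s2 s3
    linear_combination (-(z 0) ^2) * s3 + z 0 * z 1 * s1 - (z 1)^2 * s2
  rw [hfac] at hΔ
  have hroot : ∃ r, f ∣ z 0 - C r * z 1 := by
    rcases hf.dvd_or_dvd hΔ with h | h
    · exfalso
      exact hf.not_isUnit (isUnit_of_dvd_unit h ((isUnit_iff_ne_zero.2 hα0).map C))
    · rcases hf.dvd_or_dvd h with h | h
      · exact ⟨r1, h⟩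
      · exact ⟨r2, h⟩
  obtain ⟨r, hr⟩ := hroot
  let c : C4 := fun k => c2 k - r * c3 k
  have hcl : z 0 - C r * z 1 = lf c := by
    simp [z, lf, dt, cc, c]; ring
  have hdc : ∀ w, dt c w = dt c2 w - r * dt c3 w := by
    intro w; simp only [dt, c]; ring
  rw [hcl] at hr
  have hc : c ≠ 0 := by
    intro h
    have : dt c (v n 0) = D := by
      rw [hdc, e2, e3, (d4_self3 _ _ _).1, hDdef]; simp only [d4]; ring
    rw [h] at this; apply hD; rw [← this]; simp [dt]
  have hpt : ∀ y : Fin 2 → ℂ, dt c (fun k => lin (v m) y k + lin (v n) ![r, 1] k) = 0 := by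
    intro y
    rw [hdc, e2, e3]; simp only [d4, lin, Matrix.cons_val_zero, Matrix.cons_val_one]; ring
  have hev : ∀ y : Fin 2 → ℂ, y 0 * r * N 0 + y 0 * 1 * N 1 + y 1 * r * N 2 + y 1 * 1 * N 3 = 0 := by
    intro y
    have := eval_zero_of_dvd hf hc hr h1 _ (hpt y)
    rw [eval_qq, qq_yz] at this
    have := (mul_eq_zero.1 (neg_eq_zero.1 this)).resolve_left hD
    simpa [N] using this
  have v0 := hev ![1, 0]
  have v1 := hev ![0, 1]
  simp at v0 v1
  have hdet := NN_det v i m n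
  have : N 0 * N 3 - N 1 * N 2 = 0 := by linear_combination N 0 * v1 - N 2 * v0
  rw [show NN v i m n = N from rfl, this] at hdet
  exact (mul_ne_zero (h.hD i m him) (h.hD i n hin)) hdet.symm

theorem Gen.relprime {v} (h : Gen v) (i l m n : Fin 6) (hn : [i,l,m,n].Nodup) :
    IsRelPrime (qq (pp v) (vC v) i m n) (qq (pp v) (vC v) l m n) := by
  rw [UniqueFactorizationMonoid.isRelPrime_iff_no_prime_factors (h.hQ0 i m n (by simp at hn ⊢; tauto))]
  intro d h1 h2 hd
  exact h.cop i l m n hn d hd h1 h2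

theorem comb7 : ∀ i : Fin 6, ∃ m l n : Fin 6, [m,l,i,n].Nodup := by decide +kernel

theorem Gen.hp0 {v} (h : Gen v) (f : R3) (hf : Prime f) (i : Fin 6) : ∃ k, ¬ f ∣ pp v i k := by
  by_contra hcon
  push Not at hcon
  obtain ⟨m, l, n, hn⟩ := comb7 i
  have hd : ∀ w, f ∣ dt (pp v i) w := by
    intro w; simp only [dt]
    exact dvd_add (dvd_add (dvd_add ((hcon 0).mul_right _) ((hcon 1).mul_right _)) ((hcon 2).mul_right _)) ((hcon 3).mul_right _)
  have hq : ∀ m, f ∣ qq (pp v) (vC v) m i n := by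
    intro m; simp only [qq]
    exact dvd_sub ((hd _).mul_right _) ((hd _).mul_right _)
  exact h.cop m l i n hn f hf (hq m) (hq l)

end Todd
end

section
namespace Todd

def cpl (o : Fin 6) : Fin 6 := if o = 0 then 1 else 0
theorem cpl_ne (o : Fin 6) : o ≠ cpl o := by revert o; decide

theorem finrank_hom (N a : ℕ) : Module.finrank ℂ (homogeneousSubmodule (Fin N) ℂ a) = (N + a - 1).choose a := by
  rw [homogeneousSubmodule_eq_finsupp_supported]
  have e := Module.finrank_eq_nat_card_basis (basisRestrictSupport ℂ {d : Fin N →₀ ℕ | d.degree = a})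
  have h : {d : Fin N →₀ ℕ | d.degree = a} = ((Finset.univ : Finset (Fin N)).finsuppAntidiag a : Set _) := by
    ext d; simp [Finsupp.degree_eq_sum]
  unfold restrictSupport at e
  rw [e, h, Nat.card_coe_set_eq, Set.ncard_coe_finset, Finset.card_finsuppAntidiag_nat_eq_choose]
  simp

def dualc (v : Fin 6 → Fin 2 → C4) (j : Fin 6) : C4 := fun k => d4 (v j 0) (v j 1) (Pi.single k 1) (v (cpl j) 1)
def duald (v : Fin 6 → Fin 2 → C4) (j : Fin 6) : C4 := fun k => d4 (v j 0) (v j 1) (v (cpl j) 0) (Pi.single k 1)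

def restr (v : Fin 6 → Fin 2 → C4) (j : Fin 6) : R3 →ₐ[ℂ] MvPolynomial (Fin 2) ℂ :=
  aeval (fun k => C (dualc v j k) * X 0 + C (duald v j k) * X 1)

theorem restr_hom (v : Fin 6 → Fin 2 → C4) (j : Fin 6) {F : R3} {a : ℕ} (hF : F.IsHomogeneous a) :
    (restr v j F).IsHomogeneous a := by
  have := hF.aeval (fun k => C (dualc v j k) * X 0 + C (duald v j k) * X 1 : Fin 4 → MvPolynomial (Fin 2) ℂ) (n := 1)
    (fun k => by
      refine IsHomogeneous.add ?_ ?_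
      · have := (isHomogeneous_C (Fin 2) (dualc v j k)).mul (isHomogeneous_X ℂ (0 : Fin 2)); simpa using this
      · have := (isHomogeneous_C (Fin 2) (duald v j k)).mul (isHomogeneous_X ℂ (1 : Fin 2)); simpa using this)
  simpa [restr] using this

/-- forms of degree `a` vanishing on the dual lines -/
def KK (v : Fin 6 → Fin 2 → C4) (a : ℕ) : Submodule ℂ R3 :=
  homogeneousSubmodule (Fin 4) ℂ a ⊓ ⨅ j, LinearMap.ker (restr v j).toLinearMap

theorem mem_KK {v : Fin 6 → Fin 2 → C4} {a : ℕ} {F : R3} :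
    F ∈ KK v a ↔ F.IsHomogeneous a ∧ ∀ j, restr v j F = 0 := by
  simp [KK, mem_homogeneousSubmodule]

instance (N a : ℕ) : Module.Finite ℂ (homogeneousSubmodule (Fin N) ℂ a) :=
  Module.Finite.iff_fg.2 (homogeneousSubmodule_fg _ _ a)

theorem finrank_KK (v : Fin 6 → Fin 2 → C4) (a : ℕ) :
    (a + 3).choose 3 - 6 * (a + 1) ≤ Module.finrank ℂ (KK v a) := by
  let Λ : homogeneousSubmodule (Fin 4) ℂ a →ₗ[ℂ] (Fin 6 → homogeneousSubmodule (Fin 2) ℂ a) :=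
    LinearMap.pi fun j => ((restr v j).toLinearMap.restrict
      (p := homogeneousSubmodule (Fin 4) ℂ a) (q := homogeneousSubmodule (Fin 2) ℂ a)
      (fun F hF => restr_hom v j hF))
  have h1 := LinearMap.finrank_range_add_finrank_ker Λ
  have h2 : Module.finrank ℂ (LinearMap.range Λ) ≤ 6 * (a + 1) := by
    refine (Submodule.finrank_le _).trans ?_
    rw [Module.finrank_pi_fintype]
    have hc : (2 + a - 1).choose a = a + 1 := by
      rw [show 2 + a - 1 = a + 1 by omega, Nat.choose_succ_self_right]
    simp only [finrank_hom, hc]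
    simp
  have h3 : Module.finrank ℂ (LinearMap.ker Λ) ≤ Module.finrank ℂ (KK v a) := by
    have hfin : Module.Finite ℂ (KK v a) := by
      have : KK v a ≤ homogeneousSubmodule (Fin 4) ℂ a := inf_le_left
      exact Submodule.finiteDimensional_of_le this
    let g : LinearMap.ker Λ →ₗ[ℂ] KK v a := LinearMap.codRestrict (KK v a)
      ((homogeneousSubmodule (Fin 4) ℂ a).subtype ∘ₗ (LinearMap.ker Λ).subtype) (by
        rintro ⟨⟨F, hF⟩, hk⟩
        rw [mem_KK]
        refine ⟨hF, fun j => ?_⟩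
        rw [LinearMap.mem_ker] at hk
        have := congrFun hk j
        exact congrArg Subtype.val this)
    apply LinearMap.finrank_le_finrank_of_injective (f := g)
    intro x y hxy
    have := congrArg Subtype.val hxy
    exact Subtype.ext (Subtype.ext this)
  rw [finrank_hom] at h1
  have h4 : (4 + a - 1).choose a = (a + 3).choose 3 := by
    rw [show 4 + a - 1 = a + 3 by omega]
    exact Nat.choose_symm_of_eq_add (by omega)
  omega

/-- congruence -/
theorem aeval_congr_dvd {B : Type*} [CommRing B] [Algebra ℂ B] (F : R3) (Y Z : Fin 4 → B) (d : B)
    (h : ∀ k, d ∣ Y k - Z k) : d ∣ aeval Y F - aeval Z F := by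
  rw [← Ideal.mem_span_singleton, ← Ideal.Quotient.eq]
  have h2 : ∀ k, Ideal.Quotient.mkₐ ℂ (Ideal.span {d}) (Y k) = Ideal.Quotient.mkₐ ℂ (Ideal.span {d}) (Z k) := by
    intro k
    exact Ideal.Quotient.eq.2 (Ideal.mem_span_singleton.2 (h k))
  change Ideal.Quotient.mkₐ ℂ (Ideal.span {d}) (aeval Y F) = Ideal.Quotient.mkₐ ℂ (Ideal.span {d}) (aeval Z F)
  rw [← AlgHom.comp_apply, ← AlgHom.comp_apply, comp_aeval, comp_aeval]
  congr 2
  funext k; exact h2 k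

theorem KK_dvd {v : Fin 6 → Fin 2 → C4} (hv : Gen v) {a : ℕ} {F : R3} (hF : F ∈ KK v a)
    {B : Type*} [CommRing B] [Algebra ℂ B] (j : Fin 6) (d : B) (Y : Fin 4 → B)
    (h0 : d ∣ dt Y (fun k => algebraMap ℂ B (v j 0 k))) (h1 : d ∣ dt Y (fun k => algebraMap ℂ B (v j 1 k))) :
    d ∣ aeval Y F := by
  set A := algebraMap ℂ B with hA
  set D := d4 (v j 0) (v j 1) (v (cpl j) 0) (v (cpl j) 1) with hD
  have hD0 : D ≠ 0 := hv.hD _ _ (cpl_ne j)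
  have hDD : A D⁻¹ * A D = 1 := by rw [← map_mul, inv_mul_cancel₀ hD0, map_one]
  let α := A D⁻¹ * dt Y (fun k => A (v (cpl j) 0 k))
  let β := A D⁻¹ * dt Y (fun k => A (v (cpl j) 1 k))
  let Z : Fin 4 → B := fun k => A (dualc v j k) * α + A (duald v j k) * β
  have hZ : aeval Z F = 0 := by
    have h := (mem_KK.1 hF).2 j
    have h2 := congrArg (aeval ![α, β]) h
    rw [map_zero, restr, ← AlgHom.comp_apply, comp_aeval] at h2
    rw [← h2]
    congr 2
    funext k
    simp [Z, hA]
  have key : d ∣ aeval Y F - aeval Z F := by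
    apply aeval_congr_dvd
    intro k
    have hs : ∀ k, (fun x => A ((Pi.single k 1 : C4) x)) = (Pi.single k 1 : Fin 4 → B) := by
      intro k; funext x; simp only [Pi.single_apply]; split_ifs <;> simp
    have e := cramer_dual Y (fun k => A (v j 0 k)) (fun k => A (v j 1 k)) (fun k => A (v (cpl j) 0 k)) (fun k => A (v (cpl j) 1 k)) k
    rw [← d4_map' A] at e
    have ec : A (dualc v j k) = d4 (fun k => A (v j 0 k)) (fun k => A (v j 1 k)) (Pi.single k 1) (fun k => A (v (cpl j) 1 k)) := by
      rw [dualc, d4_map', hs]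
    have ed : A (duald v j k) = d4 (fun k => A (v j 0 k)) (fun k => A (v j 1 k)) (fun k => A (v (cpl j) 0 k)) (Pi.single k 1) := by
      rw [duald, d4_map', hs]
    rw [← ec, ← ed] at e
    have : Y k - Z k = A D⁻¹ * (dt Y (fun k => A (v j 0 k)) * d4 (Pi.single k 1) (fun k => A (v j 1 k)) (fun k => A (v (cpl j) 0 k)) (fun k => A (v (cpl j) 1 k))
       + dt Y (fun k => A (v j 1 k)) * d4 (fun k => A (v j 0 k)) (Pi.single k 1) (fun k => A (v (cpl j) 0 k)) (fun k => A (v (cpl j) 1 k))) := by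
      simp only [Z, α, β]
      linear_combination A D⁻¹ * e - (Y k) * hDD
    rw [this]
    exact (dvd_add (h0.mul_right _) (h1.mul_right _)).mul_left _
  rwa [hZ, sub_zero] at key

theorem aeval_scale {a : ℕ} {F : R3} (hF : F.IsHomogeneous a) {B : Type*} [CommRing B] [Algebra ℂ B]
    (c : B) (Y : Fin 4 → B) : aeval (fun k => c * Y k) F = c ^ a * aeval Y F := by
  rw [aeval_def, aeval_def, eval₂_eq', eval₂_eq', Finset.mul_sum]
  apply Finset.sum_congr rfl
  intro d hd
  have h : ∑ i, d i = a := by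
    have := hF (mem_support_iff.1 hd)
    rw [← this, Finsupp.weight_apply, Finsupp.sum_fintype _ _ (by simp)]
    simp
  simp only [mul_pow, Finset.prod_mul_distrib, Finset.prod_pow_eq_pow_sum, h]
  ring
end Todd
end

section
namespace Todd

section ufd
variable {B : Type*} [CommRing B] [IsDomain B] [UniqueFactorizationMonoid B]

theorem exists_kappa (ϖ : B) (hϖ : Prime ϖ) (E : Fin 6 → B) (hE : ∀ j, E j ≠ 0) :
    ∃ (κ : Fin 6 → ℕ) (E' : Fin 6 → B), (∀ j, E j = ϖ ^ κ j * E' j) ∧ ¬ ϖ ∣ ∏ j, E' j := by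
  have h : ∀ j, ∃ (n : ℕ) (e : B), E j = ϖ ^ n * e ∧ ¬ ϖ ∣ e := by
    intro j
    have hf := FiniteMultiplicity.of_prime_left hϖ (hE j)
    obtain ⟨c, h1, h2⟩ := hf.exists_eq_pow_mul_and_not_dvd
    exact ⟨_, c, h1, h2⟩
  choose κ E' h1 h2 using h
  refine ⟨κ, E', h1, ?_⟩
  rw [hϖ.dvd_finsetProd_iff]
  rintro ⟨j, -, hj⟩
  exact h2 j hj

theorem dvd_of_prime_pow (a b : B) (ha : a ≠ 0)
    (h : ∀ ϖ, Prime ϖ → ∀ n, ϖ ^ n ∣ a → ϖ ^ n ∣ b) : a ∣ b := by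
  revert ha h
  refine UniqueFactorizationMonoid.induction_on_coprime (P := fun a => a ≠ 0 → (∀ ϖ, Prime ϖ → ∀ n, ϖ ^ n ∣ a → ϖ ^ n ∣ b) → a ∣ b) a ?_ ?_ ?_ ?_
  · intro h; exact absurd rfl h
  · intro x hx _ _; exact hx.dvd
  · intro p i hp _ h
    exact h p hp i dvd_rfl
  · intro x y hxy hx hy hne h
    refine hxy.mul_dvd ?_ ?_
    · exact hx (left_ne_zero_of_mul hne) (fun ϖ hp n hn => h ϖ hp n (hn.mul_right _))
    · exact hy (right_ne_zero_of_mul hne) (fun ϖ hp n hn => h ϖ hp n (hn.mul_left _))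
end ufd

variable (v : Fin 6 → Fin 2 → C4)

def DD (o : Fin 6) : ℂ := d4 (v o 0) (v o 1) (v (cpl o) 0) (v (cpl o) 1)

def xp (o : Fin 6) (k : Fin 4) : R3 := C (DD v o)⁻¹ *
  (d4 XX (vC v o 1) (vC v (cpl o) 0) (vC v (cpl o) 1) * vC v o 0 k
   + d4 (vC v o 0) XX (vC v (cpl o) 0) (vC v (cpl o) 1) * vC v o 1 k)
def xs (o : Fin 6) (k : Fin 4) : R3 := C (DD v o)⁻¹ *
  (d4 (vC v o 0) (vC v o 1) XX (vC v (cpl o) 1) * vC v (cpl o) 0 k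
   + d4 (vC v o 0) (vC v o 1) (vC v (cpl o) 0) XX * vC v (cpl o) 1 k)

variable {v}

theorem d4_vC (i j k l : Fin 6) (a b c d : Fin 2) :
    d4 (vC v i a) (vC v j b) (vC v k c) (vC v l d) = C (d4 (v i a) (v j b) (v k c) (v l d)) := by
  rw [d4_map']; rfl

theorem xp_add_xs (hv : Gen v) (o : Fin 6) (k : Fin 4) : xp v o k + xs v o k = X k := by
  have h := cramer XX (vC v o 0) (vC v o 1) (vC v (cpl o) 0) (vC v (cpl o) 1) k
  rw [d4_vC] at h
  have hD : (C (DD v o)⁻¹ : R3) * C (DD v o) = 1 := by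
    rw [← C_mul, DD, inv_mul_cancel₀ (hv.hD _ _ (cpl_ne o)), C_1]
  have h2 : XX k = (X k : R3) := rfl
  rw [← h2, xp, xs]
  unfold DD at hD ⊢
  linear_combination (-C (d4 (v o 0) (v o 1) (v (cpl o) 0) (v (cpl o) 1))⁻¹) * h + XX k * hD

theorem eval_d4 (x : C4) (a b c d : Fin 4 → R3) :
    eval x (d4 a b c d) = d4 (fun k => eval x (a k)) (fun k => eval x (b k)) (fun k => eval x (c k)) (fun k => eval x (d k)) :=
  d4_map' (eval x) a b c d

theorem eval_vC (x : C4) (i : Fin 6) (c : Fin 2) : (fun k => eval x (vC v i c k)) = v i c := by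
  funext k; simp [vC, cc]
theorem eval_XX (x : C4) : (fun k => eval x (XX k)) = x := by
  funext k; simp [XX]

theorem eval_xs (o : Fin 6) (k : Fin 4) (x : C4) : eval x (xs v o k) = (DD v o)⁻¹ *
   (d4 (v o 0) (v o 1) x (v (cpl o) 1) * v (cpl o) 0 k + d4 (v o 0) (v o 1) (v (cpl o) 0) x * v (cpl o) 1 k) := by
  simp only [xs, map_mul, map_add, eval_d4, eval_vC, eval_XX, eval_C]
  simp only [vC, cc, eval_C]

theorem eval_xp (o : Fin 6) (k : Fin 4) (x : C4) : eval x (xp v o k) = (DD v o)⁻¹ *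
   (d4 x (v o 1) (v (cpl o) 0) (v (cpl o) 1) * v o 0 k + d4 (v o 0) x (v (cpl o) 0) (v (cpl o) 1) * v o 1 k) := by
  simp only [xp, map_mul, map_add, eval_d4, eval_vC, eval_XX, eval_C]
  simp only [vC, cc, eval_C]

theorem xs_mem (o : Fin 6) (k : Fin 4) : xs v o k ∈ lineIdeal (Submodule.span ℂ {v o 0, v o 1}) := by
  intro x hx
  obtain ⟨s, t, rfl⟩ := Submodule.mem_span_pair.1 hx
  rw [eval_xs]
  simp [d4]; right; ring

variable (v)
def phi (o : Fin 6) : R3 →ₐ[ℂ] Polynomial R3 :=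
  aeval (fun k => Polynomial.C (xp v o k) + Polynomial.X * Polynomial.C (xs v o k))
variable {v}

theorem phi_X (o : Fin 6) (k : Fin 4) : phi v o (X k) = Polynomial.C (xp v o k) + Polynomial.X * Polynomial.C (xs v o k) := by
  simp [phi]
theorem phi_C (o : Fin 6) (c : ℂ) : phi v o (C c) = Polynomial.C (C c) := by
  rw [← algebraMap_eq, AlgHom.commutes]; rfl

theorem eval_one_phi (hv : Gen v) (o : Fin 6) (G : R3) : Polynomial.eval 1 (phi v o G) = G := by
  have : (Polynomial.evalRingHom (1 : R3)).comp (phi v o).toRingHom = RingHom.id R3 := by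
    apply MvPolynomial.ringHom_ext
    · intro r; simp [phi_C]
    · intro k; simp [phi_X, xp_add_xs hv]
  exact RingHom.congr_fun this G

theorem phi_inj (hv : Gen v) (o : Fin 6) : Function.Injective (phi v o) := by
  intro a b h
  rw [← eval_one_phi hv o a, h, eval_one_phi hv o b]

theorem phi_rees (o : Fin 6) (G : R3) :
    phi v o G ∈ reesAlgebra (lineIdeal (Submodule.span ℂ {v o 0, v o 1})) := by
  induction G using MvPolynomial.induction_on with
  | C c => rw [phi_C]; exact Subalgebra.algebraMap_mem _ (C c : R3)
  | add p q hp hq => rw [map_add]; exact add_mem hp hq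
  | mul_X p k hp =>
    rw [map_mul, phi_X]
    refine mul_mem hp (add_mem (Subalgebra.algebraMap_mem _ (xp v o k)) ?_)
    rw [mem_reesAlgebra_iff]
    intro i
    rw [Polynomial.coeff_mul_C, Polynomial.coeff_X]
    split_ifs with h
    · subst h; simpa using xs_mem o k
    · simp

theorem mem_pow_of_dvd (hv : Gen v) (o : Fin 6) (m : ℕ) (G : R3) (h : Polynomial.X ^ m ∣ phi v o G) :
    G ∈ (lineIdeal (Submodule.span ℂ {v o 0, v o 1})) ^ m := by
  rw [← eval_one_phi hv o G, Polynomial.eval_eq_sum_range]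
  apply sum_mem
  intro i _
  simp only [one_pow, mul_one]
  rw [Polynomial.X_pow_dvd_iff] at h
  by_cases hi : i < m
  · rw [h i hi]; exact zero_mem _
  · exact Ideal.pow_le_pow_right (not_lt.1 hi) ((mem_reesAlgebra_iff _ _).1 (phi_rees o G) i)

/-- constants -/
def vP (v : Fin 6 → Fin 2 → C4) : Fin 6 → Fin 2 → Fin 4 → Polynomial R3 := fun i c k => Polynomial.C (C (v i c k))
def pP (v : Fin 6 → Fin 2 → C4) (o : Fin 6) : Fin 6 → Fin 4 → Polynomial R3 := fun i =>
  if i = o then cr (vP v o 0) (vP v o 1) (fun k => Polynomial.C (xs v o k)) else fun k => phi v o (pp v i k)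

theorem phi_vC (o i : Fin 6) (c : Fin 2) (k : Fin 4) : phi v o (vC v i c k) = vP v i c k := phi_C _ _

theorem phi_pp (o i : Fin 6) (k : Fin 4) :
   phi v o (pp v i k) = Polynomial.X ^ (if i = o then 1 else 0) * pP v o i k := by
  by_cases h : i = o
  · subst h
    simp only [pP, if_true, pow_one]
    have e : phi v i (pp v i k) = cr (vP v i 0) (vP v i 1) (fun k => phi v i (X k)) k := by
      have := cr_map' (phi v i).toRingHom (vC v i 0) (vC v i 1) XX k
      simp only [AlgHom.toRingHom_eq_coe, RingHom.coe_coe, phi_vC] at this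
      exact this
    have hp : ∀ k, Polynomial.C (xp v i k) = Polynomial.C (C (DD v i)⁻¹) *
        (Polynomial.C (d4 XX (vC v i 1) (vC v (cpl i) 0) (vC v (cpl i) 1)) * vP v i 0 k
       + Polynomial.C (d4 (vC v i 0) XX (vC v (cpl i) 0) (vC v (cpl i) 1)) * vP v i 1 k) := by
      intro k; simp only [xp, Polynomial.C_mul, Polynomial.C_add]; rfl
    rw [e]
    simp only [phi_X, hp]
    generalize vP v i 0 = a
    generalize vP v i 1 = b
    fin_cases k <;> simp [cr] <;> ring
  · simp [pP, h]

theorem phi_qq (o i m n : Fin 6) (hm : m ≠ o) :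
   phi v o (qq (pp v) (vC v) i m n) = Polynomial.X ^ (if i = o then 1 else 0) * qq (pP v o) (vP v) i m n := by
  have := qq_map (phi v o).toRingHom (pp v) (vC v) i m n
  simp only [AlgHom.toRingHom_eq_coe, RingHom.coe_coe, phi_vC] at this
  rw [this]
  simp only [qq, dt, phi_pp, hm, if_false, pow_zero, one_mul]
  simp only [vP]
  ring

theorem coeff_zero_phi (o : Fin 6) (G : R3) : (phi v o G).coeff 0 = aeval (xp v o) G := by
  have : (Polynomial.constantCoeff (R := R3)).comp (phi v o).toRingHom = (aeval (xp v o) : R3 →ₐ[ℂ] R3).toRingHom := by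
    apply MvPolynomial.ringHom_ext
    · intro r; simp [phi_C, ← algebraMap_eq]
    · intro k; simp [phi_X]
  exact RingHom.congr_fun this G

theorem eval_coeff_zero (o : Fin 6) (G : R3) (x : C4) : eval x ((phi v o G).coeff 0) = eval (fun k => eval x (xp v o k)) G := by
  rw [coeff_zero_phi]
  have : (eval x).comp (aeval (xp v o) : R3 →ₐ[ℂ] R3).toRingHom = eval (fun k => eval x (xp v o k)) := by
    apply MvPolynomial.ringHom_ext
    · intro r; simp [← algebraMap_eq]
    · intro k; simp
  exact RingHom.congr_fun this G

theorem xp_at (hv : Gen v) (o : Fin 6) : (fun k => eval (v o 0) (xp v o k)) = v o 0 := by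
  funext k
  have hD := hv.hD _ _ (cpl_ne o)
  rw [eval_xp]
  have h1 : d4 (v o 0) (v o 0) (v (cpl o) 0) (v (cpl o) 1) = 0 := by simp only [d4]; ring
  rw [h1, DD]; field_simp; ring

theorem not_X_dvd_phi (hv : Gen v) (o : Fin 6) (G : R3) (h : eval (v o 0) G ≠ 0) : ¬ Polynomial.X ∣ phi v o G := by
  rw [Polynomial.X_dvd_iff]
  intro h0
  have := eval_coeff_zero (v := v) o G (v o 0)
  rw [h0, xp_at hv, map_zero] at this
  exact h this.symm

theorem not_X_dvd_const (c : ℂ) (hc : c ≠ 0) : ¬ (Polynomial.X : Polynomial R3) ∣ Polynomial.C (C c) := by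
  rw [Polynomial.X_dvd_iff]; simpa using hc

theorem qP_ndvd (hv : Gen v) (o i m n : Fin 6) (h : [i,m,n].Nodup) (hi : i ≠ o) (hm : m ≠ o) (hn : n ≠ o) :
    ¬ Polynomial.X ∣ qq (pP v o) (vP v) i m n := by
  have e := phi_qq (v := v) o i m n hm
  simp only [hi, if_false, pow_zero, one_mul] at e
  rw [← e]
  apply not_X_dvd_phi hv
  rw [eval_qq]
  apply hv.h4
  simp at h ⊢; tauto

theorem comb8 : ∀ o i : Fin 6, ∃ m n, i ≠ o → ([m,i,n].Nodup ∧ m ≠ o ∧ n ≠ o) := by decide +kernel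

theorem pP_ndvd (hv : Gen v) (o i : Fin 6) : ∃ k, ¬ Polynomial.X ∣ pP v o i k := by
  by_contra hcon
  push Not at hcon
  have hd : ∀ w, Polynomial.X ∣ dt (pP v o i) w := by
    intro w; simp only [dt]
    exact dvd_add (dvd_add (dvd_add ((hcon 0).mul_right _) ((hcon 1).mul_right _)) ((hcon 2).mul_right _)) ((hcon 3).mul_right _)
  by_cases hi : i = o
  · subst hi
    have h := hd (vP v (cpl i) 0)
    simp only [pP, if_true, dt_cr] at h
    have e : d4 (vP v i 0) (vP v i 1) (fun k => Polynomial.C (xs v i k)) (vP v (cpl i) 0)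
       = Polynomial.C (d4 (vC v i 0) (vC v i 1) (xs v i) (vC v (cpl i) 0)) := by
      rw [d4_map']; rfl
    rw [e, Polynomial.X_dvd_iff, Polynomial.coeff_C_zero] at h
    have h2 := congrArg (eval (v (cpl i) 1)) h
    rw [eval_d4, map_zero] at h2
    simp only [eval_vC, eval_xs] at h2
    have h3 : d4 (v i 0) (v i 1) (v (cpl i) 1) (v (cpl i) 1) = 0 := by simp only [d4]; ring
    rw [h3] at h2
    have hD := hv.hD _ _ (cpl_ne i)
    apply hD
    rw [DD] at h2
    rw [← neg_eq_zero, ← h2]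
    simp only [zero_mul, zero_add, inv_mul_cancel_left₀ hD]
    simp only [d4]; ring
  · obtain ⟨m, n, h⟩ := comb8 o i
    obtain ⟨h1, h2, h3⟩ := h hi
    apply qP_ndvd hv o m i n h1 h2 hi h3
    simp only [qq]
    exact dvd_sub ((hd _).mul_right _) ((hd _).mul_right _)

theorem pP_v (o i : Fin 6) (c : Fin 2) : dt (pP v o i) (vP v i c) = 0 := by
  by_cases h : i = o
  · subst h
    simp only [pP, if_true, dt_cr]
    fin_cases c <;> simp [d4] <;> ring
  · simp only [pP, h, if_false]
    have := congrArg (phi v o) (pv_v (vC v) XX i c)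
    simp only [map_zero] at this
    rw [← this]
    simp only [dt, map_add, map_mul, phi_vC]; rfl
end Todd
end

section
namespace Todd

theorem hc_mul {A : R3} {m : ℕ} (hA : A.IsHomogeneous m) (B : R3) (i : ℕ) :
    homogeneousComponent (m + i) (A * B) = A * homogeneousComponent i B := by
  conv_lhs => rw [← sum_homogeneousComponent B, Finset.mul_sum, map_sum]
  have : ∀ j ∈ Finset.range (B.totalDegree + 1), homogeneousComponent (m + i) (A * homogeneousComponent j B)
     = if j = i then A * homogeneousComponent j B else 0 := by
    intro j _
    have h : (A * homogeneousComponent j B).IsHomogeneous (m + j) := hA.mul (homogeneousComponent_isHomogeneous j B)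
    rw [homogeneousComponent_of_mem h]
    by_cases hj : j = i
    · subst hj; simp
    · rw [if_neg hj, if_neg (by omega)]
  rw [Finset.sum_congr rfl this, Finset.sum_ite_eq']
  split_ifs with h
  · rfl
  · rw [homogeneousComponent_eq_zero, mul_zero]
    simp at h; omega

theorem hom_div {A B : R3} {m n : ℕ} (hA : A.IsHomogeneous m) (hA0 : A ≠ 0) (h : (A * B).IsHomogeneous n) :
    B.IsHomogeneous (n - m) := by
  have key : ∀ i, i ≠ n - m → homogeneousComponent i B = 0 := by
    intro i hi
    have h1 := hc_mul hA B i
    rw [homogeneousComponent_of_mem h, if_neg (by omega)] at h1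
    exact (mul_eq_zero.1 h1.symm).resolve_left hA0
  rw [← sum_homogeneousComponent B]
  apply IsHomogeneous.sum
  intro i _
  by_cases hi : i = n - m
  · rw [← hi]; exact homogeneousComponent_isHomogeneous _ _
  · rw [key i hi]; exact isHomogeneous_zero _ _ _

structure StD (v : Fin 6 → Fin 2 → C4) (st : Fin 6 → Fin 2 → R3) : Prop where
  hsum : ∀ k l, ∑ i, lin (vC v i) (st i) k * pp v i l = 0
  hord : ∀ o i c, Polynomial.X ^ (if i = o then 1 else 2) ∣ phi v o (st i c)
  hhom : ∀ i c, (st i c).IsHomogeneous 7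

variable {v : Fin 6 → Fin 2 → C4} {st : Fin 6 → Fin 2 → R3}

theorem hom_d4 {a b c d : Fin 4 → R3} {α β γ δ : ℕ} (ha : ∀ k, (a k).IsHomogeneous α) (hb : ∀ k, (b k).IsHomogeneous β)
    (hc : ∀ k, (c k).IsHomogeneous γ) (hd : ∀ k, (d k).IsHomogeneous δ) : (d4 a b c d).IsHomogeneous ((α + β) + (γ + δ)) := by
  have h1 : ∀ i j, (a i * b j - a j * b i).IsHomogeneous (α + β) := fun i j =>
    ((ha i).mul (hb j)).sub ((ha j).mul (hb i))
  have h2 : ∀ i j, (c i * d j - c j * d i).IsHomogeneous (γ + δ) := fun i j =>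
    ((hc i).mul (hd j)).sub ((hc j).mul (hd i))
  have h3 : ∀ i j k l, ((a i * b j - a j * b i) * (c k * d l - c l * d k)).IsHomogeneous ((α + β) + (γ + δ)) :=
    fun i j k l => (h1 i j).mul (h2 k l)
  exact (((((h3 _ _ _ _).sub (h3 _ _ _ _)).add (h3 _ _ _ _)).add (h3 _ _ _ _)).sub (h3 _ _ _ _)).add (h3 _ _ _ _)

theorem hom_vC (i : Fin 6) (c : Fin 2) (k : Fin 4) : (vC v i c k).IsHomogeneous 0 := isHomogeneous_C _ _
theorem hom_XX (k : Fin 4) : (XX k).IsHomogeneous 1 := isHomogeneous_X _ _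
theorem hom_single (k l : Fin 4) : ((Pi.single k 1 : Fin 4 → R3) l).IsHomogeneous 0 := by
  by_cases h : l = k
  · subst h; simp; exact isHomogeneous_one _ _
  · simp [h]; exact isHomogeneous_zero _ _ _

theorem dt_single {B : Type*} [CommRing B] (a : Fin 4 → B) (k : Fin 4) : dt a (Pi.single k 1) = a k := by
  fin_cases k <;> simp [dt]

theorem hom_cr {a b c : Fin 4 → R3} {α β γ : ℕ} (ha : ∀ k, (a k).IsHomogeneous α) (hb : ∀ k, (b k).IsHomogeneous β)
    (hc : ∀ k, (c k).IsHomogeneous γ) (k : Fin 4) : (cr a b c k).IsHomogeneous (α + β + γ) := by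
  have := hom_d4 ha hb hc (hom_single k)
  rwa [← dt_cr, dt_single, add_zero] at this

theorem hom_dt {a b : Fin 4 → R3} {α β : ℕ} (ha : ∀ k, (a k).IsHomogeneous α) (hb : ∀ k, (b k).IsHomogeneous β) :
    (dt a b).IsHomogeneous (α + β) :=
  ((((ha 0).mul (hb 0)).add ((ha 1).mul (hb 1))).add ((ha 2).mul (hb 2))).add ((ha 3).mul (hb 3))

theorem hom_lin {i : Fin 6} {t : Fin 2 → R3} {n : ℕ} (ht : ∀ c, (t c).IsHomogeneous n) (k : Fin 4) :
    (lin (vC v i) t k).IsHomogeneous n :=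
  ((ht 0).mul (hom_vC i 0 k)).add ((ht 1).mul (hom_vC i 1 k))

theorem hom_pp (i : Fin 6) (k : Fin 4) : (pp v i k).IsHomogeneous 1 := by
  exact hom_cr (hom_vC (v := v) i 0) (hom_vC i 1) hom_XX k

theorem hom_qq (i m n : Fin 6) : (qq (pp v) (vC v) i m n).IsHomogeneous 2 :=
  ((hom_dt (hom_pp _) (hom_vC _ _)).mul (hom_dt (hom_pp _) (hom_vC _ _))).sub
   ((hom_dt (hom_pp _) (hom_vC _ _)).mul (hom_dt (hom_pp _) (hom_vC _ _)))

def SS (v : Fin 6 → Fin 2 → C4) (st : Fin 6 → Fin 2 → R3) : Fin 4 → R3 :=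
  cr (lin (vC v 2) (st 2)) (lin (vC v 3) (st 3)) (lin (vC v 4) (st 4))

theorem nod4 {i j m n : Fin 6} (h : [i,j,m,n].Nodup) : [j,m,n].Nodup ∧ [i,m,n].Nodup ∧ j ≠ i := by
  simp at h ⊢; tauto
theorem nod6 {i j k l m n : Fin 6} (h : [i,j,k,l,m,n].Nodup) : [l,m,n].Nodup := by
  simp at h ⊢; tauto

set_option maxHeartbeats 4000000 in
/-- The main bound. -/
theorem main_bound (hv : Gen v) (hs : StD v st) (a : ℕ) (ha : 4 ≤ a)
    (hdom : ∀ F : R3, F.IsHomogeneous a → aeval (SS v st) F = 0 → F = 0) :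
    (a + 3).choose 3 - 6 * (a + 1) ≤ Module.finrank ℂ
      ↥(linSys (19 * a - 72) (fun i : Fin 6 => Submodule.span ℂ {v i 0, v i 1}) (fun _ => 5 * a - 19)) := by
  obtain ⟨T, E, hT, hE, hE2⟩ := exists_T (vC v) (pp v) st
    (fun i m n => qq_pv_swap23 (vC v) XX i m n) (fun i c => pv_v (vC v) XX i c) hs.hsum hv.hQ0 hv.relprime
  -- T is dominant
  obtain ⟨ε0, hε0, hT0⟩ := hT 2 3 4 0 1 5 (by decide)
  have hTF : ∀ F : R3, F.IsHomogeneous a → aeval T F = 0 → F = 0 := by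
    intro F hF h
    apply hdom F hF
    have e : SS v st = fun k => (ε0 * qq (pp v) (vC v) 0 1 5) * T k := by
      funext k
      have := hT0 k
      simp only [SS]
      rcases hε0 with rfl | rfl
      · linear_combination -this
      · linear_combination this
    rw [e, aeval_scale hF, h, mul_zero]
  have hlfa : ∀ c : C4, c ≠ 0 → dt T (cc c) ≠ 0 := by
    intro c hc h0
    have h1 : ((lf c) ^ a).IsHomogeneous a := by
      have h2 : (lf c).IsHomogeneous 1 := hom_dt (fun k => isHomogeneous_C _ _) hom_XX
      simpa using h2.pow a
    have h3 := hTF _ h1 (by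
      rw [map_pow]
      have : aeval T (lf c) = dt T (cc c) := by
        simp only [lf, dt, cc, XX, map_add, map_mul, aeval_X, aeval_C, algebraMap_eq]; ring
      rw [this, h0, zero_pow (by omega)])
    exact (lf_irr c hc).ne_zero (pow_eq_zero_iff (by omega : a ≠ 0) |>.1 h3)
  have hv0 : ∀ j, v j 0 ≠ 0 := by
    intro j h
    apply hv.hD j (cpl j) (cpl_ne j)
    rw [h]; simp [d4]
  have hj : ∀ j, E j ≠ 0 ∧ st j 1 ≠ 0 := by
    intro j
    obtain ⟨ε, h1, -⟩ := hE j
    have h2 : dt T (vC v j 0) ≠ 0 := hlfa _ (hv0 j)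
    constructor <;> (intro h; apply h2; rw [h1, h]; ring)
  have hE0 : ∀ j, E j ≠ 0 := fun j => (hj j).1
  -- homogeneity
  have hhomT : ∀ k, (T k).IsHomogeneous 19 := by
    intro k
    refine hom_div (n := 21) (hom_qq 0 1 5) (hv.hQ0 0 1 5 (by decide)) ?_
    rw [hT0 k]
    have h := hom_cr (hom_lin (v := v) (i := 2) (hs.hhom 2)) (hom_lin (v := v) (i := 3) (hs.hhom 3)) (hom_lin (v := v) (i := 4) (hs.hhom 4)) k
    rcases hε0 with rfl | rfl
    · simpa using h
    · simpa using h.neg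
  have hhomE : ∀ j, (E j).IsHomogeneous 12 := by
    intro j
    obtain ⟨i, k, l, m, n, hn, h⟩ := hE2 j
    refine hom_div (n := 14) (hom_qq l m n) (hv.hQ0 l m n (nod6 hn)) ?_
    rw [h]
    exact hom_d4 (hom_vC j 0) (hom_vC j 1) (hom_lin (hs.hhom i)) (hom_lin (hs.hhom k))
  have hprod0 : ∏ j, E j ≠ 0 := Finset.prod_ne_zero_iff.2 fun j _ => hE0 j
  have hhomP : (∏ j, E j).IsHomogeneous 72 := by
    have := IsHomogeneous.prod Finset.univ E (fun _ => 12) (fun j _ => hhomE j)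
    simpa using this
  -- divisibility
  have hdiv : ∀ F ∈ KK v a, ∏ j, E j ∣ aeval T F := by
    intro F hF
    apply dvd_of_prime_pow _ _ hprod0
    intro ϖ hϖ n hn
    obtain ⟨κ, E', h1, h2⟩ := exists_kappa ϖ hϖ E hE0
    have hcst : ∀ c : ℂ, c ≠ 0 → ¬ ϖ ∣ C c := by
      intro c hc h
      exact hϖ.not_isUnit (isUnit_of_dvd_unit h ((isUnit_iff_ne_zero.2 hc).map C))
    have h3 := norm_claim ϖ hϖ (vC v) (pp v) st 0 0 T E
      (fun i j hij => by rw [d4_vC]; exact hcst _ (hv.hD i j hij))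
      (fun m n i j k h => by
        have := c5_map (C : ℂ →+* R3) v m n i j k
        have e : (fun i c k => C (v i c k)) = vC v := rfl
        rw [e] at this
        rw [← this]; exact hcst _ (hv.h5 m n i j k h))
      (fun i c => pv_v (vC v) XX i c) (hv.hp0 ϖ hϖ) (by simp) (by simpa using hs.hsum)
      ⟨0, 1, (hj 0).2⟩
      (fun i j m n h _ _ => by
        by_contra hcon; push Not at hcon
        exact hv.cop i j m n h ϖ hϖ hcon.1 hcon.2)
      (fun i j k l m n h _ _ => by
        obtain ⟨ε, he, h4⟩ := hT i j k l m n h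
        refine ⟨ε, ?_, by simpa using h4⟩
        rcases he with rfl | rfl <;> simp)
      hE κ (fun j => ⟨E' j, h1 j⟩) a ha (fun Y => aeval Y F)
      (fun c Y => aeval_scale (mem_KK.1 hF).1 c Y)
      (fun j d Y h0 h1 => KK_dvd hv hF j d Y h0 h1)
    refine dvd_trans ?_ h3
    rw [zero_mul, zero_add]
    have h4 : ∏ j, E j = ϖ ^ (∑ j, κ j) * ∏ j, E' j := by
      rw [← Finset.prod_pow_eq_pow_sum, ← Finset.prod_mul_distrib]
      exact Finset.prod_congr rfl fun j _ => h1 j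
    rw [h4] at hn
    exact hϖ.pow_dvd_of_dvd_mul_right n h2 hn
  have hord : ∀ F ∈ KK v a, ∀ G, aeval T F = (∏ j, E j) * G → ∀ o, Polynomial.X ^ (5 * a - 19) ∣ phi v o G := by
    intro F hF G hG o
    have hpE : ∀ j, phi v o (E j) ≠ 0 := fun j h => hE0 j (phi_inj hv o (by rw [h, map_zero]))
    obtain ⟨κ, E', h1, h2⟩ := exists_kappa Polynomial.X Polynomial.prime_X (fun j => phi v o (E j)) hpE
    have elin : ∀ i k, phi v o (lin (vC v i) (st i) k) = lin (vP v i) (fun c => phi v o (st i c)) k := by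
      intro i k; simp only [lin, map_add, map_mul, phi_vC]
    have h3 := norm_claim Polynomial.X Polynomial.prime_X (vP v) (pP v o) (fun i c => phi v o (st i c)) o 1
      (fun k => phi v o (T k)) (fun j => phi v o (E j))
      (fun i j hij => by
        have e : d4 (vP v i 0) (vP v i 1) (vP v j 0) (vP v j 1) = Polynomial.C (C (d4 (v i 0) (v i 1) (v j 0) (v j 1))) := by
          rw [d4_map', d4_map']; rfl
        rw [e]; exact not_X_dvd_const _ (hv.hD i j hij))
      (fun m n i j k h => by
        have e : c5 (vP v) m n i j k = Polynomial.C (C (c5 v m n i j k)) := by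
          rw [c5_map, c5_map]; rfl
        rw [e]; exact not_X_dvd_const _ (hv.h5 m n i j k h))
      (fun i c => pP_v o i c) (pP_ndvd hv o)
      (fun i c => by simpa using hs.hord o i c)
      (fun k l => by
        have := congrArg (phi v o) (hs.hsum k l)
        rw [map_sum, map_zero] at this
        simp only [map_mul, elin, phi_pp] at this
        exact this)
      ⟨0, 1, fun h => (hj 0).2 (phi_inj hv o (by rw [h, map_zero]))⟩
      (fun i j m n h hm hn => by
        by_cases hi : i = o
        · right
          exact qP_ndvd hv o j m n (nod4 h).1 (by rw [← hi]; exact (nod4 h).2.2) hm hn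
        · left
          exact qP_ndvd hv o i m n (nod4 h).2.1 hi hm hn)
      (fun i j k l m n h hm hn => by
        obtain ⟨ε, he, h4⟩ := hT i j k l m n h
        refine ⟨phi v o ε, ?_, fun x => ?_⟩
        · rcases he with rfl | rfl <;> simp
        · have := congrArg (phi v o) (h4 x)
          rw [map_mul, map_mul, phi_qq o l m n hm] at this
          rw [this]
          congr 1
          have h5 := cr_map' (phi v o).toRingHom (lin (vC v i) (st i)) (lin (vC v j) (st j)) (lin (vC v k) (st k)) x
          simp only [AlgHom.toRingHom_eq_coe, RingHom.coe_coe, elin] at h5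
          exact h5)
      (fun j => by
        obtain ⟨ε, h4, h5⟩ := hE j
        have edt : ∀ c, phi v o (dt T (vC v j c)) = dt (fun k => phi v o (T k)) (vP v j c) := by
          intro c; simp only [dt, map_add, map_mul, phi_vC]
        refine ⟨phi v o ε, ?_, ?_⟩
        · rw [← edt, h4]; simp only [map_mul]
        · rw [← edt, h5]; simp only [map_mul, map_neg])
      κ (fun j => ⟨E' j, h1 j⟩) a ha (fun Y => aeval Y F)
      (fun c Y => aeval_scale (mem_KK.1 hF).1 c Y)
      (fun j d Y h0 h1 => KK_dvd hv hF j d Y h0 h1)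
    have h4 : ∏ j, phi v o (E j) = Polynomial.X ^ (∑ j, κ j) * ∏ j, E' j := by
      rw [← Finset.prod_pow_eq_pow_sum, ← Finset.prod_mul_distrib]
      exact Finset.prod_congr rfl fun j _ => h1 j
    have h5 : aeval (fun k => phi v o (T k)) F = phi v o (aeval T F) := by
      have := comp_aeval_apply (phi v o) (f := T) F
      rw [this]
    beta_reduce at h3
    rw [h5, hG, map_mul, map_prod, h4, one_mul, pow_add, mul_comm (Polynomial.X ^ (5 * a - 19)), mul_assoc] at h3
    have h6 := (mul_dvd_mul_iff_left (pow_ne_zero _ Polynomial.X_ne_zero)).1 h3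
    exact Polynomial.prime_X.pow_dvd_of_dvd_mul_left _ h2 h6
  -- linear map
  choose! g hg using hdiv
  have hfin : Module.Finite ℂ ↥(linSys (19 * a - 72) (fun i : Fin 6 => Submodule.span ℂ {v i 0, v i 1}) (fun _ => 5 * a - 19)) :=
    Submodule.finiteDimensional_of_le (S₂ := homogeneousSubmodule (Fin 4) ℂ (19 * a - 72)) inf_le_left
  refine (finrank_KK v a).trans ?_
  let L : KK v a →ₗ[ℂ] ↥(linSys (19 * a - 72) (fun i : Fin 6 => Submodule.span ℂ {v i 0, v i 1}) (fun _ => 5 * a - 19)) :=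
    { toFun := fun F => ⟨g F, by
        simp only [linSys, Submodule.mem_inf, mem_homogeneousSubmodule, Submodule.mem_iInf, Submodule.restrictScalars_mem]
        constructor
        · refine hom_div hhomP hprod0 ?_
          rw [← hg F F.2]
          exact (mem_KK.1 F.2).1.aeval T hhomT
        · intro o
          exact mem_pow_of_dvd hv o _ _ (hord F F.2 _ (hg F F.2) o)⟩
      map_add' := by
        intro F F'
        apply Subtype.ext
        apply mul_left_cancel₀ hprod0
        change (∏ j, E j) * g (F + F' : KK v a) = (∏ j, E j) * (g F + g F')
        rw [mul_add, ← hg _ (F + F').2, ← hg F F.2, ← hg F' F'.2]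
        simp
      map_smul' := by
        intro c F
        apply Subtype.ext
        apply mul_left_cancel₀ hprod0
        change (∏ j, E j) * g (c • F : KK v a) = (∏ j, E j) * (c • g F)
        rw [mul_smul_comm, ← hg _ (c • F).2, ← hg F F.2]
        simp }
  apply LinearMap.finrank_le_finrank_of_injective (f := L)
  rw [injective_iff_map_eq_zero]
  intro F hF
  have h0 : g F = 0 := congrArg Subtype.val hF
  have := hg F F.2
  rw [h0, mul_zero] at this
  exact Subtype.ext (hTF F (mem_KK.1 F.2).1 this)
end Todd
end

section
namespace Todd

def bl : Fin 2 → Fin 6 := ![0, 1]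
def cl : Fin 2 → Fin 2 → Fin 6 := ![![2, 3], ![4, 5]]
abbrev IX := Fin 2 × Fin 2 × Fin 2

section gen
variable {B : Type*} [CommRing B]

/-- dual basis -/
def tv (v : Fin 6 → Fin 2 → Fin 4 → B) (i r : Fin 2) : Fin 4 → B :=
  if r = 0 then fun k => -(cr (v (bl i) 1) (v (bl (i + 1)) 0) (v (bl (i + 1)) 1) k)
  else cr (v (bl i) 0) (v (bl (i + 1)) 0) (v (bl (i + 1)) 1)

def D0 (v : Fin 6 → Fin 2 → Fin 4 → B) : B := d4 (v 0 0) (v 0 1) (v 1 0) (v 1 1)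

theorem tv_cramer (v : Fin 6 → Fin 2 → Fin 4 → B) (w : Fin 4 → B) (k : Fin 4) :
    D0 v * w k = ∑ i, ∑ r, dt (tv v i r) w * v (bl i) r k := by
  simp only [Fin.sum_univ_two]
  simp only [tv, bl, D0, dt, cr, d4]
  fin_cases k <;> simp <;> ring

theorem tv_cramer' (v : Fin 6 → Fin 2 → Fin 4 → B) (q : Fin 4 → B) (k : Fin 4) :
    D0 v * q k = ∑ i, ∑ r, dt q (v (bl i) r) * tv v i r k := by
  simp only [Fin.sum_univ_two]
  simp only [tv, bl, D0, dt, cr, d4]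
  fin_cases k <;> simp <;> ring

theorem tv_dt (v : Fin 6 → Fin 2 → Fin 4 → B) (q w : Fin 4 → B) :
    D0 v * dt q w = ∑ i, ∑ r, dt (tv v i r) w * dt q (v (bl i) r) := by
  have : D0 v * dt q w = q 0 * (D0 v * w 0) + q 1 * (D0 v * w 1) + q 2 * (D0 v * w 2) + q 3 * (D0 v * w 3) := by
    simp only [dt]; ring
  rw [this]
  simp only [tv_cramer, Fin.sum_univ_two]
  simp only [dt]; ring

theorem tv_pv0 (v : Fin 6 → Fin 2 → Fin 4 → B) (x : Fin 4 → B) (i : Fin 2) :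
    dt (tv v (i + 1) 0) x = dt (pv v x (bl i)) (v (bl (i + 1)) 1) := by
  fin_cases i <;> simp [tv, bl, pv, dt, cr] <;> ring
theorem tv_pv1 (v : Fin 6 → Fin 2 → Fin 4 → B) (x : Fin 4 → B) (i : Fin 2) :
    dt (tv v (i + 1) 1) x = - dt (pv v x (bl i)) (v (bl (i + 1)) 0) := by
  fin_cases i <;> simp [tv, bl, pv, dt, cr] <;> ring

theorem tv_self (v : Fin 6 → Fin 2 → Fin 4 → B) (i r : Fin 2) : dt (tv v i r) (v (bl i) r) = D0 v := by
  fin_cases i <;> fin_cases r <;> simp [tv, bl, dt, cr, D0, d4] <;> ring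
theorem tv_other (v : Fin 6 → Fin 2 → Fin 4 → B) (i r : Fin 2) : dt (tv v i r) (v (bl i) (r + 1)) = 0 := by
  fin_cases i <;> fin_cases r <;> simp [tv, bl, dt, cr] <;> ring
theorem tv_other' (v : Fin 6 → Fin 2 → Fin 4 → B) (i r f : Fin 2) : dt (tv v i r) (v (bl (i + 1)) f) = 0 := by
  fin_cases i <;> fin_cases r <;> fin_cases f <;> simp [tv, bl, dt, cr] <;> ring

def WW (v : Fin 6 → Fin 2 → Fin 4 → B) (x : Fin 4 → B) : Matrix IX IX B := fun a b =>
  dt (tv v a.1 a.2.1) (v (cl b.1 b.2.1) b.2.2) * dt (pv v x (cl b.1 b.2.1)) (v (bl a.1) a.2.2)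

def uu (v : Fin 6 → Fin 2 → Fin 4 → B) (x : Fin 4 → B) (k : IX) : B :=
  ((WW v x).updateRow (1,1,1) (Pi.single k 1)).det

theorem W_dep (v : Fin 6 → Fin 2 → Fin 4 → B) (x : Fin 4 → B) (b : IX) :
    WW v x (0,0,0) b + WW v x (0,1,1) b + WW v x (1,0,0) b + WW v x (1,1,1) b = 0 := by
  have := tv_dt v (pv v x (cl b.1 b.2.1)) (v (cl b.1 b.2.1) b.2.2)
  rw [pv_v, mul_zero] at this
  simp only [Fin.sum_univ_two] at this
  simp only [WW]
  linear_combination -this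

theorem W_det (v : Fin 6 → Fin 2 → Fin 4 → B) (x : Fin 4 → B) : (WW v x).det = 0 := by
  have h := Matrix.det_updateRow_sum (WW v x) (1,1,1) (fun l => if l = (0,0,0) ∨ l = (0,1,1) ∨ l = (1,0,0) ∨ l = (1,1,1) then 1 else 0)
  rw [if_pos (by simp), one_smul] at h
  rw [← h]
  apply Matrix.det_eq_zero_of_row_eq_zero (1,1,1)
  intro b
  rw [Matrix.updateRow_self]
  simp only [Fintype.sum_prod_type, Fin.sum_univ_two]
  simp
  linear_combination W_dep v x b

theorem W_u (v : Fin 6 → Fin 2 → Fin 4 → B) (x : Fin 4 → B) (a : IX) : ∑ b, WW v x a b * uu v x b = 0 := by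
  have h := congrFun (congrFun (Matrix.mul_adjugate (WW v x)) a) (1,1,1)
  rw [W_det, zero_smul, Matrix.mul_apply] at h
  simpa [Matrix.adjugate_apply, uu] using h

theorem det_dvd {n : Type*} [Fintype n] [DecidableEq n] (M : Matrix n n B) (w : n → B)
    (h : ∀ i j, w j ∣ M i j) : ∏ j, w j ∣ M.det := by
  choose N hN using h
  have : M = Matrix.of (fun i j => w j * N i j) := by ext i j; exact hN i j
  rw [this]
  have h2 := Matrix.det_mul_row w (Matrix.of N)
  simp only [Matrix.of_apply] at h2
  rw [h2]
  exact dvd_mul_right _ _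

theorem det_dvd' {n : Type*} [Fintype n] [DecidableEq n] (M : Matrix n n B) (w : n → B)
    (h : ∀ i j, w i ∣ M i j) : ∏ j, w j ∣ M.det := by
  rw [← Matrix.det_transpose]
  exact det_dvd _ w (fun i j => h j i)

theorem det_rows {n : Type*} [Fintype n] [DecidableEq n] [IsDomain B] (ϖ : B) (hϖ : Prime ϖ) (M : Matrix n n B) (i j : n) (hij : i ≠ j)
    (c d : n → B) (hc : ∀ k, ϖ ∣ ∑ l, c l * M l k) (hd : ∀ k, ϖ ∣ ∑ l, d l * M l k) (hdi : d i = 0)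
    (hci : ¬ ϖ ∣ c i) (hdj : ¬ ϖ ∣ d j) : ϖ ^ 2 ∣ M.det := by
  set M1 := M.updateRow i (∑ l, c l • M l) with hM1
  set M2 := M1.updateRow j (∑ l, d l • M1 l) with hM2
  have e1 : M1.det = c i • M.det := Matrix.det_updateRow_sum M i c
  have e2 : M2.det = d j • M1.det := Matrix.det_updateRow_sum M1 j d
  have e3 : ∑ l, d l • M1 l = ∑ l, d l • M l := by
    apply Finset.sum_congr rfl
    intro l _
    by_cases h : l = i
    · rw [h, hdi, zero_smul, zero_smul]
    · rw [hM1, Matrix.updateRow_ne h]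
  have h := det_dvd' M2 (fun l => if l = i ∨ l = j then ϖ else 1) (by
    intro l k
    by_cases hj : l = j
    · subst hj
      rw [if_pos (Or.inr rfl), hM2, Matrix.updateRow_self, e3]
      simpa using hd k
    · by_cases hi : l = i
      · subst hi
        rw [if_pos (Or.inl rfl), hM2, Matrix.updateRow_ne hj, hM1, Matrix.updateRow_self]
        simpa using hc k
      · rw [if_neg (by tauto)]; exact one_dvd _)
  have e4 : ∏ l, (if l = i ∨ l = j then ϖ else 1) = ϖ ^ 2 := by
    rw [Finset.prod_ite, Finset.prod_const_one, mul_one, Finset.prod_const]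
    congr 1
    have : Finset.univ.filter (fun l => l = i ∨ l = j) = {i, j} := by ext l; simp
    rw [this, Finset.card_pair hij]
  rw [e4, e2, e1, smul_eq_mul, smul_eq_mul, ← mul_assoc] at h
  refine hϖ.pow_dvd_of_dvd_mul_left 2 ?_ h
  rw [hϖ.dvd_mul]; tauto

theorem det_cols {n : Type*} [Fintype n] [DecidableEq n] (ϖ : B) (M : Matrix n n B) (i j : n) (hij : i ≠ j)
    (hi : ∀ k, ϖ ∣ M k i) (hj : ∀ k, ϖ ∣ M k j) : ϖ ^ 2 ∣ M.det := by
  have h := det_dvd M (fun l => if l = i ∨ l = j then ϖ else 1) (by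
    intro k l
    split_ifs with h
    · rcases h with rfl | rfl
      · exact hi k
      · exact hj k
    · exact one_dvd _)
  have e4 : ∏ l, (if l = i ∨ l = j then ϖ else 1) = ϖ ^ 2 := by
    rw [Finset.prod_ite, Finset.prod_const_one, mul_one, Finset.prod_const]
    congr 1
    have : Finset.univ.filter (fun l => l = i ∨ l = j) = {i, j} := by ext l; simp
    rw [this, Finset.card_pair hij]
  rwa [e4] at h

theorem det_col {n : Type*} [Fintype n] [DecidableEq n] (ϖ : B) (M : Matrix n n B) (i : n)
    (hi : ∀ k, ϖ ∣ M k i) : ϖ ∣ M.det := by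
  have h := det_dvd M (fun l => if l = i then ϖ else 1) (by
    intro k l
    split_ifs with h
    · subst h; exact hi k
    · exact one_dvd _)
  simpa using h
end gen
end Todd
end

section
namespace Todd
variable {v : Fin 6 → Fin 2 → C4}

theorem fin2_cases : ∀ i j : Fin 2, j = i ∨ j = i + 1 := by decide
theorem succ_ne2 : ∀ c : Fin 2, c + 1 ≠ c := by decide
theorem cl_bl : ∀ e g i, cl e g ≠ bl i := by decide

/-- homogeneity of a determinant by rows -/
theorem hom_det {n : Type*} [Fintype n] [DecidableEq n] (M : Matrix n n R3) (d : n → ℕ)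
    (h : ∀ i j, (M i j).IsHomogeneous (d i)) : M.det.IsHomogeneous (∑ i, d i) := by
  rw [← Matrix.det_transpose, Matrix.det_apply]
  apply IsHomogeneous.sum
  intro σ _
  have : (∏ i, M.transpose (σ i) i).IsHomogeneous (∑ i, d i) :=
    IsHomogeneous.prod _ _ _ (fun i _ => h i (σ i))
  rcases Int.units_eq_one_or (Equiv.Perm.sign σ) with hs | hs <;> rw [hs]
  · simpa using this
  · simpa using this.neg

theorem hom_tv (i r : Fin 2) (k : Fin 4) : (tv (vC v) i r k).IsHomogeneous 0 := by
  unfold tv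
  split_ifs
  · exact (hom_cr (hom_vC _ _) (hom_vC _ _) (hom_vC _ _) k).neg
  · exact hom_cr (hom_vC _ _) (hom_vC _ _) (hom_vC _ _) k

theorem hom_WW (a b : IX) : (WW (vC v) XX a b).IsHomogeneous 1 := by
  exact (hom_dt (hom_tv a.1 a.2.1) (hom_vC (v := v) (cl b.1 b.2.1) b.2.2)).mul (hom_dt (hom_pp (v := v) (cl b.1 b.2.1)) (hom_vC (bl a.1) a.2.2))

theorem hom_uu (k : IX) : (uu (vC v) XX k).IsHomogeneous 7 := by
  have := hom_det ((WW (vC v) XX).updateRow (1,1,1) (Pi.single k 1)) (fun i => if i = (1,1,1) then 0 else 1) (by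
    intro i j
    by_cases hi : i = (1,1,1)
    · subst hi
      rw [Matrix.updateRow_self, if_pos rfl]
      by_cases h : j = k
      · subst h; simp; exact isHomogeneous_one _ _
      · simp [h]; exact isHomogeneous_zero _ _ _
    · rw [Matrix.updateRow_ne hi, if_neg hi]; exact hom_WW i j)
  have e : ∑ i : IX, (if i = (1,1,1) then 0 else 1) = 7 := by decide
  rwa [e] at this

theorem D0_vC : D0 (vC v) = C (D0 v) := d4_vC ..
theorem D0_ne (hv : Gen v) : D0 v ≠ 0 := hv.hD 0 1 (by decide)
theorem D0_ne' (hv : Gen v) : D0 (vC v) ≠ 0 := by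
  rw [D0_vC]; simpa using D0_ne hv

/-- some `p_i(v_j f)` is not divisible when `p_i` isn't -/
theorem exists_dt_ndvd {B : Type*} [CommRing B] (ϖ : B) (hϖ : Prime ϖ) (v : Fin 6 → Fin 2 → Fin 4 → B) (i : Fin 2)
    (hD : ¬ ϖ ∣ D0 v) (q : Fin 4 → B) (hq : ∃ k, ¬ ϖ ∣ q k) (h0 : ∀ c, dt q (v (bl i) c) = 0) :
    ∃ f, ¬ ϖ ∣ dt q (v (bl (i + 1)) f) := by
  by_contra hcon
  push Not at hcon
  obtain ⟨k, hk⟩ := hq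
  have h := tv_cramer' v q k
  have h2 : ϖ ∣ D0 v * q k := by
    rw [h]
    apply Finset.dvd_sum; intro j _
    apply Finset.dvd_sum; intro r _
    apply Dvd.dvd.mul_right
    have : j = i ∨ j = i + 1 := fin2_cases i j
    rcases this with rfl | rfl
    · rw [h0]; exact dvd_zero _
    · exact hcon r
  rcases hϖ.dvd_or_dvd h2 with h | h
  · exact hD h
  · exact hk h

theorem dt_rel (hv : Gen v) (i : Fin 2) : IsRelPrime (dt (pp v (bl i)) (vC v (bl (i+1)) 0)) (dt (pp v (bl i)) (vC v (bl (i+1)) 1)) := by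
  have hbl : bl i ≠ bl (i + 1) := by revert i; decide
  have hne : dt (pp v (bl i)) (vC v (bl (i+1)) 0) ≠ 0 := by
    intro h
    have h2 := congrArg (eval (v (bl (i+1)) 1)) h
    simp only [pp, pv, dt_cr] at h2
    rw [eval_d4] at h2
    simp only [eval_vC, eval_XX, map_zero] at h2
    apply hv.hD _ _ hbl
    rw [← neg_eq_zero, ← h2]
    simp only [d4]; ring
  rw [UniqueFactorizationMonoid.isRelPrime_iff_no_prime_factors hne]
  intro d h0 h1 hd
  obtain ⟨f, hf⟩ := exists_dt_ndvd d hd (vC v) i (by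
    rw [D0_vC]
    intro h
    exact hd.not_isUnit (isUnit_of_dvd_unit h ((isUnit_iff_ne_zero.2 (D0_ne hv)).map C))) (pp v (bl i)) (hv.hp0 d hd _)
    (fun c => pv_v (vC v) XX _ c)
  fin_cases f
  · exact hf h0
  · exact hf h1

theorem phi_dt_pp (o i j : Fin 6) (c : Fin 2) : phi v o (dt (pp v i) (vC v j c))
    = Polynomial.X ^ (if i = o then 1 else 0) * dt (pP v o i) (vP v j c) := by
  simp only [dt, map_add, map_mul, phi_pp, phi_vC]; ring

theorem ord_H (hv : Gen v) (o : Fin 6) (i : Fin 2) (H : R3)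
    (h : ∀ f, Polynomial.X ^ 2 ∣ phi v o (dt (pp v (bl i)) (vC v (bl (i+1)) f) * H)) :
    Polynomial.X ^ (if bl i = o then 1 else 2) ∣ phi v o H := by
  have hD : ¬ Polynomial.X ∣ D0 (vP v) := by
    have e : D0 (vP v) = Polynomial.C (C (D0 v)) := by
      unfold D0; rw [d4_map', d4_map']; rfl
    rw [e]; exact not_X_dvd_const _ (D0_ne hv)
  obtain ⟨f, hf⟩ := exists_dt_ndvd Polynomial.X Polynomial.prime_X (vP v) i hD (pP v o (bl i)) (pP_ndvd hv o _) (fun c => pP_v o _ c)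
  have h2 := h f
  rw [map_mul, phi_dt_pp, mul_assoc] at h2
  refine Polynomial.prime_X.pow_dvd_of_dvd_mul_left _ hf ?_
  by_cases ho : bl i = o
  · rw [if_pos ho] at h2 ⊢
    rw [pow_succ, pow_one] at h2
    rw [pow_one]
    exact (mul_dvd_mul_iff_left Polynomial.X_ne_zero).1 h2
  · rw [if_neg ho] at h2 ⊢
    rwa [pow_zero, one_mul] at h2

/-- entries of the mapped matrix -/
theorem phi_uu (o : Fin 6) (k : IX) : phi v o (uu (vC v) XX k) =
    (((WW (vC v) XX).map (phi v o)).updateRow (1,1,1) (Pi.single k 1)).det := by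
  have := RingHom.map_det (phi v o).toRingHom ((WW (vC v) XX).updateRow (1,1,1) (Pi.single k 1))
  simp only [AlgHom.toRingHom_eq_coe, RingHom.coe_coe] at this
  rw [uu, this]
  congr 1
  ext i j
  by_cases hi : i = (1,1,1)
  · subst hi
    by_cases h : j = k
    · subst h; simp
    · simp [h]
  · simp [Matrix.updateRow_ne hi]

theorem cl_inj : ∀ e g e' g', cl e g = cl e' g' → e = e' ∧ g = g' := by decide
theorem cases_six (o : Fin 6) : (∃ i, o = bl i) ∨ ∃ e g, o = cl e g := by revert o; decide

theorem phi_W_col (e g : Fin 2) (a : IX) (c : Fin 2) :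
    Polynomial.X ∣ phi v (cl e g) (WW (vC v) XX a (e,g,c)) := by
  have : WW (vC v) XX a (e,g,c) = dt (tv (vC v) a.1 a.2.1) (vC v (cl e g) c) * dt (pp v (cl e g)) (vC v (bl a.1) a.2.2) := rfl
  rw [this, map_mul, phi_dt_pp, if_pos rfl, pow_one]
  exact (dvd_mul_right _ _).mul_left _

theorem phi_y_dvd (i r : Fin 2) (b : IX) :
    Polynomial.X ∣ phi v (bl i) (dt (tv (vC v) i 0) XX) * phi v (bl i) (WW (vC v) XX (i,r,0) b) 
     + phi v (bl i) (dt (tv (vC v) i 1) XX) * phi v (bl i) (WW (vC v) XX (i,r,1) b) := by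
  set m := cl b.1 b.2.1 with hm
  have h := tv_dt (vC v) (pp v m) XX
  have h0 : dt (pp v m) XX = 0 := by
    simp only [pp, pv, dt_cr, d4]; ring
  have hs : ∀ g : Fin 2 → R3, ∑ j, g j = g i + g (i + 1) := by
    intro g; fin_cases i <;> simp [add_comm]
  rw [h0, mul_zero, hs] at h
  simp only [Fin.sum_univ_two] at h
  rw [tv_pv0, tv_pv1] at h
  have e : ∀ f, WW (vC v) XX (i,r,f) b = dt (tv (vC v) i r) (vC v m b.2.2) * dt (pp v m) (vC v (bl i) f) := fun f => rfl
  rw [e, e, ← map_mul, ← map_mul, ← map_add]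
  have e2 : dt (tv (vC v) i 0) XX * (dt (tv (vC v) i r) (vC v m b.2.2) * dt (pp v m) (vC v (bl i) 0)) +
      dt (tv (vC v) i 1) XX * (dt (tv (vC v) i r) (vC v m b.2.2) * dt (pp v m) (vC v (bl i) 1))
     = dt (tv (vC v) i r) (vC v m b.2.2) * (dt (pp v m) (vC v (bl (i+1)) 1) * dt (pp v (bl i)) (vC v (bl (i+1)) 0)
        - dt (pp v m) (vC v (bl (i+1)) 0) * dt (pp v (bl i)) (vC v (bl (i+1)) 1)) := by
    unfold pp at h ⊢
    linear_combination (-dt (tv (vC v) i r) (vC v m b.2.2)) * h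
  rw [e2, map_mul, map_sub, map_mul, map_mul, phi_dt_pp _ (bl i), phi_dt_pp _ (bl i), if_pos rfl, pow_one]
  refine Dvd.dvd.mul_left (dvd_sub ?_ ?_) _ <;> exact (dvd_mul_right _ _).mul_left _

theorem y_ndvd (hv : Gen v) (i : Fin 2) : ¬ Polynomial.X ∣ phi v (bl i) (dt (tv (vC v) i 0) XX) := by
  apply not_X_dvd_phi hv
  have e : eval (v (bl i) 0) (dt (tv (vC v) i 0) XX) = dt (tv v i 0) (v (bl i) 0) := by
    rw [dt_map]
    congr 1
    · funext k
      simp only [tv, if_true, Function.comp, map_neg, cr_map', eval_vC]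
    · exact eval_XX _
  rw [e, tv_self]
  exact D0_ne hv

theorem ord_uu (hv : Gen v) (o : Fin 6) (e g c : Fin 2) :
    Polynomial.X ^ (if cl e g = o then 1 else 2) ∣ phi v o (uu (vC v) XX (e,g,c)) := by
  rw [phi_uu]
  set k : IX := (e,g,c) with hk
  set W' := (WW (vC v) XX).map (phi v o) with hW'
  set M := W'.updateRow (1,1,1) (Pi.single k 1) with hM
  have hrow : ∀ l, l ≠ (1,1,1) → ∀ j, M l j = phi v o (WW (vC v) XX l j) := by
    intro l hl j; rw [hM, Matrix.updateRow_ne hl]; rfl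
  rcases cases_six o with ⟨i, rfl⟩ | ⟨e', g', rfl⟩
  · have hne : cl e g ≠ bl i := cl_bl e g i
    rw [if_neg hne]
    have hy := y_ndvd hv i
    obtain rfl | rfl : i = 0 ∨ i = 1 := fin2_cases 0 i
    · refine det_rows Polynomial.X Polynomial.prime_X M (0,0,0) (0,1,0) (by decide)
        (fun l => if l = (0,0,0) then phi v (bl 0) (dt (tv (vC v) 0 0) XX) else if l = (0,0,1) then phi v (bl 0) (dt (tv (vC v) 0 1) XX) else 0)
        (fun l => if l = (0,1,0) then phi v (bl 0) (dt (tv (vC v) 0 0) XX) else if l = (0,1,1) then phi v (bl 0) (dt (tv (vC v) 0 1) XX) else 0)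
        ?_ ?_ (by simp) (by simpa using hy) (by simpa using hy)
      · intro b
        have := phi_y_dvd (v := v) 0 0 b
        rw [← hrow (0,0,0) (by decide), ← hrow (0,0,1) (by decide)] at this
        simpa [Fintype.sum_prod_type, Fin.sum_univ_two] using this
      · intro b
        have := phi_y_dvd (v := v) 0 1 b
        rw [← hrow (0,1,0) (by decide), ← hrow (0,1,1) (by decide)] at this
        simpa [Fintype.sum_prod_type, Fin.sum_univ_two] using this
    · refine det_rows Polynomial.X Polynomial.prime_X M (1,1,0) (1,0,0) (by decide)
        (fun l => if l = (1,1,0) then phi v (bl 1) (dt (tv (vC v) 1 0) XX) else 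
          if l = (0,0,0) ∨ l = (0,1,1) ∨ l = (1,0,0) then -phi v (bl 1) (dt (tv (vC v) 1 1) XX) else 0)
        (fun l => if l = (1,0,0) then phi v (bl 1) (dt (tv (vC v) 1 0) XX) else if l = (1,0,1) then phi v (bl 1) (dt (tv (vC v) 1 1) XX) else 0)
        ?_ ?_ (by simp) (by simpa using hy) (by simpa using hy)
      · intro b
        have h1 := phi_y_dvd (v := v) 1 1 b
        have h2 := congrArg (phi v (bl 1)) (W_dep (vC v) XX b)
        simp only [map_add, map_zero] at h2
        have h3 : phi v (bl 1) (WW (vC v) XX (1,1,1) b) = -(M (0,0,0) b + M (0,1,1) b + M (1,0,0) b) := by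
          rw [hrow _ (by decide), hrow _ (by decide), hrow _ (by decide)]
          linear_combination h2
        rw [h3] at h1
        have h4 : phi v (bl 1) (WW (vC v) XX (1,1,0) b) = M (1,1,0) b := (hrow _ (by decide) b).symm
        rw [h4] at h1
        convert h1 using 1
        simp [Fintype.sum_prod_type, Fin.sum_univ_two]
        ring
      · intro b
        have := phi_y_dvd (v := v) 1 0 b
        rw [← hrow (1,0,0) (by decide), ← hrow (1,0,1) (by decide)] at this
        simpa [Fintype.sum_prod_type, Fin.sum_univ_two] using this
  · have hcol : ∀ l c', (e',g',c') ≠ k → Polynomial.X ∣ M l (e',g',c') := by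
      intro l c' hne
      by_cases hl : l = (1,1,1)
      · rw [hl, hM, Matrix.updateRow_self, Pi.single_eq_of_ne hne]; exact dvd_zero _
      · rw [hrow l hl]; exact phi_W_col e' g' l c'
    split_ifs with h
    · obtain ⟨h1, h2⟩ := cl_inj _ _ _ _ h
      rw [pow_one]
      refine det_col _ M (e',g',c+1) (fun l => hcol l _ ?_)
      rw [hk]
      intro h3
      have h4 : c + 1 = c := (Prod.ext_iff.1 (Prod.ext_iff.1 h3).2).2
      exact succ_ne2 c h4
    · have hne : ∀ c', (e',g',c') ≠ k := by
        intro c' h3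
        apply h
        have h4 : e' = e := (Prod.ext_iff.1 h3).1
        have h5 : g' = g := (Prod.ext_iff.1 (Prod.ext_iff.1 h3).2).1
        rw [h4, h5]
      exact det_cols _ M (e',g',0) (e',g',1) (by simp) (fun l => hcol l _ (hne _)) (fun l => hcol l _ (hne _))
end Todd
end

section
namespace Todd
variable {v : Fin 6 → Fin 2 → C4}

theorem dt_lin {B : Type*} [CommRing B] (q : Fin 4 → B) (w : Fin 2 → Fin 4 → B) (t : Fin 2 → B) :
    dt q (lin w t) = t 0 * dt q (w 0) + t 1 * dt q (w 1) := by
  simp only [dt, lin]; ring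

/-- the tail coordinates -/
def ut (v : Fin 6 → Fin 2 → C4) (e g : Fin 2) : Fin 2 → R3 := fun c => uu (vC v) XX (e, g, c)

theorem W_rel (i r f : Fin 2) : ∑ e, ∑ g, dt (tv (vC v) i r) (lin (vC v (cl e g)) (ut v e g)) * dt (pp v (cl e g)) (vC v (bl i) f) = 0 := by
  have h := W_u (vC v) XX (i, r, f)
  rw [← h]
  simp only [Fintype.sum_prod_type]
  refine Finset.sum_congr rfl fun e _ => Finset.sum_congr rfl fun g _ => ?_
  rw [dt_lin, Fin.sum_univ_two]
  simp only [WW, ut, pp]; ring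

def Sf (v : Fin 6 → Fin 2 → C4) (i r f : Fin 2) : R3 :=
  ∑ e, ∑ g, dt (tv (vC v) i r) (lin (vC v (cl e g)) (ut v e g)) * dt (pp v (cl e g)) (vC v (bl (i+1)) f)

theorem Sf_rel (i r : Fin 2) : Sf v i r 0 * dt (pp v (bl i)) (vC v (bl (i+1)) 1) = Sf v i r 1 * dt (pp v (bl i)) (vC v (bl (i+1)) 0) := by
  have hq : ∀ m, dt (pp v m) (vC v (bl (i+1)) 0) * dt (pp v (bl i)) (vC v (bl (i+1)) 1) - dt (pp v m) (vC v (bl (i+1)) 1) * dt (pp v (bl i)) (vC v (bl (i+1)) 0)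
      = dt (pp v (bl (i+1))) (vC v (bl i) 0) * dt (pp v m) (vC v (bl i) 1) - dt (pp v (bl (i+1))) (vC v (bl i) 1) * dt (pp v m) (vC v (bl i) 0) := by
    intro m
    have := qq_pv_swap23 (vC v) XX m (bl i) (bl (i+1))
    simp only [qq] at this
    simp only [pp]
    linear_combination -this
  have h0 := W_rel (v := v) i r 0
  have h1 := W_rel (v := v) i r 1
  simp only [Sf, Fin.sum_univ_two] at h0 h1 ⊢
  set t00 := dt (tv (vC v) i r) (lin (vC v (cl 0 0)) (ut v 0 0))
  set t01 := dt (tv (vC v) i r) (lin (vC v (cl 0 1)) (ut v 0 1))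
  set t10 := dt (tv (vC v) i r) (lin (vC v (cl 1 0)) (ut v 1 0))
  set t11 := dt (tv (vC v) i r) (lin (vC v (cl 1 1)) (ut v 1 1))
  linear_combination t00 * hq (cl 0 0) + t01 * hq (cl 0 1) + t10 * hq (cl 1 0) + t11 * hq (cl 1 1)
    + dt (pp v (bl (i+1))) (vC v (bl i) 0) * h1 - dt (pp v (bl (i+1))) (vC v (bl i) 1) * h0

theorem bl_ne : ∀ i, bl i ≠ bl (i+1) := by decide

theorem exists_H (hv : Gen v) (i r : Fin 2) : ∃ H : R3, ∀ f, Sf v i r f = dt (pp v (bl i)) (vC v (bl (i+1)) f) * H := by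
  have hr := Sf_rel (v := v) i r
  have hp := dt_rel hv i
  obtain ⟨H, hH⟩ : dt (pp v (bl i)) (vC v (bl (i+1)) 0) ∣ Sf v i r 0 :=
    hp.dvd_of_dvd_mul_right (Dvd.intro_left _ hr.symm)
  have hne : dt (pp v (bl i)) (vC v (bl (i+1)) 0) ≠ 0 ∨ dt (pp v (bl i)) (vC v (bl (i+1)) 0) = 0 := by tauto
  rcases hne with hne | h0
  · refine ⟨H, fun f => ?_⟩
    obtain rfl | rfl := fin2_cases 0 f
    · exact hH
    · apply mul_right_cancel₀ hne
      rw [hH] at hr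
      rw [show (0 : Fin 2) + 1 = 1 from rfl]
      linear_combination -hr
  · exfalso
    rw [h0] at hp
    rw [isRelPrime_zero_left] at hp
    have hbl : bl i ≠ bl (i + 1) := bl_ne i
    have h2 := congrArg (eval (v (bl (i+1)) 1)) h0
    simp only [pp, pv, dt_cr] at h2
    rw [eval_d4] at h2
    simp only [eval_vC, eval_XX, map_zero] at h2
    apply hv.hD _ _ hbl
    rw [← neg_eq_zero, ← h2]
    simp only [d4]; ring

def mk6 {A : Type*} (H : Fin 2 → A) (U : Fin 2 → Fin 2 → A) : Fin 6 → A :=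
  ![H 0, H 1, U 0 0, U 0 1, U 1 0, U 1 1]
theorem mk6_bl {A : Type*} (H : Fin 2 → A) (U : Fin 2 → Fin 2 → A) (i : Fin 2) : mk6 H U (bl i) = H i := by fin_cases i <;> rfl
theorem mk6_cl {A : Type*} (H : Fin 2 → A) (U : Fin 2 → Fin 2 → A) (e g : Fin 2) : mk6 H U (cl e g) = U e g := by
  fin_cases e <;> fin_cases g <;> rfl
def mkst (v : Fin 6 → Fin 2 → C4) (H : Fin 2 → Fin 2 → R3) : Fin 6 → Fin 2 → R3 :=
  mk6 H (ut v)
theorem mkst_bl (H : Fin 2 → Fin 2 → R3) (i : Fin 2) : mkst v H (bl i) = H i := mk6_bl _ _ i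
theorem mkst_cl (H : Fin 2 → Fin 2 → R3) (e g : Fin 2) : mkst v H (cl e g) = ut v e g := mk6_cl _ _ e g

theorem sum_blcl {B : Type*} [CommRing B] (F : Fin 6 → B) (i : Fin 2) :
    ∑ m, F m = F (bl i) + F (bl (i+1)) + ∑ e, ∑ g, F (cl e g) := by
  rw [Fin.sum_univ_six]
  simp only [Fin.sum_univ_two]
  fin_cases i <;> simp [bl, cl] <;> ring

theorem dt_sum (q : Fin 4 → R3) (F : Fin 6 → Fin 4 → R3) : dt q (fun k => ∑ m, F m k) = ∑ m, dt q (F m) := by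
  simp only [dt, Fin.sum_univ_six]; ring

theorem exists_st (hv : Gen v) : ∃ st : Fin 6 → Fin 2 → R3, StD v st ∧ ∀ e g, st (cl e g) = ut v e g := by
  choose H hH using fun i r => exists_H hv i r
  have hD := D0_ne hv
  have hDD : (C (D0 v)⁻¹ : R3) * D0 (vC v) = 1 := by
    rw [D0_vC, ← C_mul, inv_mul_cancel₀ hD, C_1]
  refine ⟨mkst v (fun i r => C (-(D0 v)⁻¹) * H i r), ⟨?_, ?_, ?_⟩, fun e g => mkst_cl _ e g⟩
  · set st := mkst v (fun i r => C (-(D0 v)⁻¹) * H i r) with hst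
    have hbl : ∀ i, st (bl i) = fun r => C (-(D0 v)⁻¹) * H i r := fun i => mkst_bl _ i
    have hcl : ∀ e g, st (cl e g) = ut v e g := fun e g => mkst_cl _ e g
    have key : ∀ i r j f, ∑ m, dt (tv (vC v) i r) (lin (vC v m) (st m)) * dt (pp v m) (vC v (bl j) f) = 0 := by
      intro i r j f
      rw [sum_blcl _ i]
      simp only [hcl]
      have e2 : dt (tv (vC v) i r) (lin (vC v (bl (i+1))) (st (bl (i+1)))) = 0 := by
        rw [dt_lin, tv_other', tv_other']; ring
      rw [e2]
      obtain rfl | rfl := fin2_cases i j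
      · rw [W_rel]
        have : dt (pp v (bl j)) (vC v (bl j) f) = 0 := pv_v (vC v) XX _ f
        rw [this]; ring
      · have e3 : dt (tv (vC v) i r) (lin (vC v (bl i)) (st (bl i))) = - H i r := by
          rw [dt_lin, hbl]
          obtain rfl | rfl := fin2_cases 0 r
          · rw [tv_self]
            have := tv_other (vC v) i 0
            rw [show (0 : Fin 2) + 1 = 1 from rfl] at this
            rw [this, C_neg]
            linear_combination (-H i 0) * hDD
          · rw [show (0 : Fin 2) + 1 = 1 from rfl, tv_self]
            have := tv_other (vC v) i 1
            rw [show (1 : Fin 2) + 1 = 0 from rfl] at this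
            rw [this, C_neg]
            linear_combination (-H i 1) * hDD
        have e4 := hH i r f
        rw [Sf] at e4
        rw [e3, e4]; ring
    have key2 : ∀ j f k, ∑ m, lin (vC v m) (st m) k * dt (pp v m) (vC v (bl j) f) = 0 := by
      intro j f k
      apply (mul_eq_zero.1 _).resolve_left (D0_ne' hv)
      have := tv_cramer (vC v) (fun k => ∑ m, lin (vC v m) (st m) k * dt (pp v m) (vC v (bl j) f)) k
      rw [this]
      refine Finset.sum_eq_zero fun i _ => Finset.sum_eq_zero fun r _ => ?_
      rw [dt_sum (tv (vC v) i r) (fun m k => lin (vC v m) (st m) k * dt (pp v m) (vC v (bl j) f))]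
      have : ∑ m, dt (tv (vC v) i r) (fun k => lin (vC v m) (st m) k * dt (pp v m) (vC v (bl j) f)) = 0 := by
        rw [← key i r j f]
        refine Finset.sum_congr rfl fun m _ => ?_
        simp only [dt]; ring
      rw [this, zero_mul]
    intro k l
    apply (mul_eq_zero.1 _).resolve_left (D0_ne' hv)
    have := tv_cramer' (vC v) (fun l => ∑ m, lin (vC v m) (st m) k * pp v m l) l
    rw [this]
    refine Finset.sum_eq_zero fun j _ => Finset.sum_eq_zero fun f _ => ?_
    have : dt (fun l => ∑ m, lin (vC v m) (st m) k * pp v m l) (vC v (bl j) f) = 0 := by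
      rw [← key2 j f k]
      simp only [dt, Fin.sum_univ_six]; ring
    rw [this, zero_mul]
  · intro o m c
    rcases cases_six m with ⟨i, rfl⟩ | ⟨e, g, rfl⟩
    · rw [mkst_bl, map_mul]
      apply Dvd.dvd.mul_left
      apply ord_H hv
      intro f
      rw [← hH, Sf, map_sum]
      apply Finset.dvd_sum; intro e _
      rw [map_sum]
      apply Finset.dvd_sum; intro g _
      rw [map_mul, phi_dt_pp, dt_lin, map_add, map_mul, map_mul]
      have h : ∀ c, Polynomial.X ^ (if cl e g = o then 1 else 2) ∣ phi v o (ut v e g c) := fun c => ord_uu hv o e g c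
      have h2 : Polynomial.X ^ (if cl e g = o then 1 else 2) ∣ phi v o (ut v e g 0) * phi v o (dt (tv (vC v) i c) (vC v (cl e g) 0)) +
        phi v o (ut v e g 1) * phi v o (dt (tv (vC v) i c) (vC v (cl e g) 1)) := dvd_add ((h 0).mul_right _) ((h 1).mul_right _)
      have h3 := mul_dvd_mul h2 (dvd_mul_right (Polynomial.X ^ (if cl e g = o then 1 else 0)) (dt (pP v o (cl e g)) (vP v (bl (i+1)) f)))
      rw [← pow_add] at h3
      have h4 : (if cl e g = o then 1 else 2) + (if cl e g = o then 1 else 0) = 2 := by split_ifs <;> rfl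
      rwa [h4] at h3
    · rw [mkst_cl]; exact ord_uu hv o e g c
  · intro m c
    rcases cases_six m with ⟨i, rfl⟩ | ⟨e, g, rfl⟩
    · rw [mkst_bl]
      refine IsHomogeneous.C_mul ?_ _
      have h1 : ∀ f, (dt (pp v (bl i)) (vC v (bl (i+1)) f)).IsHomogeneous 1 := fun f => hom_dt (hom_pp _) (hom_vC _ _)
      have h2 : ∀ f, (Sf v i c f).IsHomogeneous 8 := by
        intro f
        refine IsHomogeneous.sum _ _ _ fun e _ => IsHomogeneous.sum _ _ _ fun g _ => ?_
        exact (hom_dt (hom_tv i c) (hom_lin (fun c => hom_uu _))).mul (hom_dt (hom_pp _) (hom_vC _ _))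
      by_cases h0 : dt (pp v (bl i)) (vC v (bl (i+1)) 0) = 0
      · have hp := dt_rel hv i
        rw [h0, isRelPrime_zero_left] at hp
        refine hom_div (n := 8) (h1 1) hp.ne_zero ?_
        rw [← hH]; exact h2 1
      · refine hom_div (n := 8) (h1 0) h0 ?_
        rw [← hH]; exact h2 0
    · rw [mkst_cl]; exact hom_uu _
end Todd
end

section
namespace Todd

section gen
variable {B B' : Type*} [CommRing B] [CommRing B']

theorem tv_map (f : B →+* B') (v : Fin 6 → Fin 2 → Fin 4 → B) (i r : Fin 2) (k : Fin 4) :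
    f (tv v i r k) = tv (fun i c k => f (v i c k)) i r k := by
  unfold tv
  split_ifs
  · rw [map_neg, cr_map']
  · rw [cr_map']

theorem dt_map2 (f : B →+* B') (a b : Fin 4 → B) : f (dt a b) = dt (fun k => f (a k)) (fun k => f (b k)) := dt_map f a b

theorem WW_map (f : B →+* B') (v : Fin 6 → Fin 2 → Fin 4 → B) (x : Fin 4 → B) (a b : IX) :
    f (WW v x a b) = WW (fun i c k => f (v i c k)) (fun k => f (x k)) a b := by
  simp only [WW, map_mul, dt_map2, tv_map]
  have := congrFun (pv_map f v x) (cl b.1 b.2.1)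
  simp only [this]

theorem uu_map (f : B →+* B') (v : Fin 6 → Fin 2 → Fin 4 → B) (x : Fin 4 → B) (k : IX) :
    f (uu v x k) = uu (fun i c k => f (v i c k)) (fun k => f (x k)) k := by
  unfold uu
  rw [RingHom.map_det]
  congr 1
  ext a b
  by_cases h : a = (1,1,1)
  · subst h
    simp only [RingHom.mapMatrix_apply, Matrix.map_apply, Matrix.updateRow_self, Pi.single_apply]
    split_ifs <;> simp
  · simp only [RingHom.mapMatrix_apply, Matrix.map_apply, Matrix.updateRow_ne h, WW_map]

/-- the Todd map -/
def TT (v : Fin 6 → Fin 2 → Fin 4 → B) (x : Fin 4 → B) : Fin 4 → B :=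
  cr (lin (v 2) (fun c => uu v x (0,0,c))) (lin (v 3) (fun c => uu v x (0,1,c))) (lin (v 4) (fun c => uu v x (1,0,c)))

theorem TT_map (f : B →+* B') (v : Fin 6 → Fin 2 → Fin 4 → B) (x : Fin 4 → B) (k : Fin 4) :
    f (TT v x k) = TT (fun i c k => f (v i c k)) (fun k => f (x k)) k := by
  simp only [TT, cr_map', lin_map, uu_map]

theorem uu_prop (v : Fin 6 → Fin 2 → Fin 4 → B) (x : Fin 4 → B) (w : IX → B) (hw : ∀ a, ∑ b, WW v x a b * w b = 0) (k l : IX) :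
    uu v x k * w l = w k * uu v x l := by
  set M := (WW v x).updateRow (1,1,1) (Pi.single k 1) with hM
  have h1 : M.mulVec w = w k • Pi.single (1,1,1) 1 := by
    ext a
    by_cases h : a = (1,1,1)
    · subst h
      simp [Matrix.mulVec, hM, dotProduct, Pi.single_apply]
    · simp only [Matrix.mulVec, hM, dotProduct, Matrix.updateRow_ne h, hw]
      simp [h]
  have h2 : M.adjugate.mulVec (M.mulVec w) = M.det • w := by
    rw [Matrix.mulVec_mulVec, Matrix.adjugate_mul, Matrix.smul_mulVec, Matrix.one_mulVec]
  rw [h1, Matrix.mulVec_smul] at h2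
  have h3 := congrFun h2 l
  simp only [Pi.smul_apply, smul_eq_mul, Matrix.mulVec_single_one, Matrix.col_apply, Matrix.adjugate_apply, hM, Matrix.updateRow_idem] at h3
  exact h3.symm

theorem cr_perp (T a b c : Fin 4 → B) (ha : dt T a = 0) (hb : dt T b = 0) (hc : dt T c = 0) (k : Fin 4) :
    T 0 * cr a b c k = cr a b c 0 * T k := by
  simp only [dt] at ha hb hc
  fin_cases k
  · simp [mul_comm]
  · simp [cr]
    linear_combination (b 2 * c 3 - b 3 * c 2) * ha - (a 2 * c 3 - a 3 * c 2) * hb + (a 2 * b 3 - a 3 * b 2) * hc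
  · simp [cr]
    linear_combination -(b 1 * c 3 - b 3 * c 1) * ha + (a 1 * c 3 - a 3 * c 1) * hb - (a 1 * b 3 - a 3 * b 1) * hc
  · simp [cr]
    linear_combination (b 1 * c 2 - b 2 * c 1) * ha - (a 1 * c 2 - a 2 * c 1) * hb + (a 1 * b 2 - a 2 * b 1) * hc

/-- degenerate test configuration -/
def tZ : Fin 6 → Fin 2 → Fin 4 → ℤ :=
  ![![![1,0,0,0],![0,1,0,0]], ![![0,0,1,0],![0,0,0,1]],
    ![![1,0,1,0],![0,1,0,0]], ![![1,0,1,0],![0,1,0,1]],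
    ![![1,0,0,-1],![0,1,-1,0]], ![![1,0,0,1],![0,1,1,0]]]

def tB (B : Type*) [CommRing B] : Fin 6 → Fin 2 → Fin 4 → B := fun i c k => ((tZ i c k : ℤ) : B)

/-- its kernel vector -/
def us (X : Fin 4 → B) : IX → B :=
  let x := X 0
  let y := X 1
  let z := X 2
  let w := X 3
  let h := x - z
  let k := y - w
  let d := x * z - y * w
  fun p => ![![![2*w*d*(k*k-h*h), 2*h*d*(k*k-h*h)], ![2*w*w*k*d, -2*w*w*h*d]], ![![w*w*h*(x-y)*(h+k),
    x^4*w-3*x^3*z*w-x^3*w^2-x^2*y^2*w+2*x^2*y*w^2+3*x^2*z^2*w+2*x^2*z*w^2+x*y^2*z*w+x*y^2*w^2-3*x*y*z*w^2-x*y*w^3-x*z^3*w-x*z^2*w^2-y^2*z*w^2+y*z^2*w^2+y*z*w^3],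
   ![-x^3*w^2+2*x^2*z*w^2-x^2*w^3+x*y^2*w^2+x*y*z*w^2-x*y*w^3-x*z^2*w^2+x*z*w^3-y^2*z*w^2-y*z^2*w^2+y*z*w^3,
    -x^4*w+3*x^3*z*w-x^3*w^2+x^2*y^2*w-2*x^2*y*w^2-3*x^2*z^2*w+2*x^2*z*w^2-x*y^2*z*w+x*y^2*w^2+3*x*y*z*w^2-x*y*w^3+x*z^3*w-x*z^2*w^2-y^2*z*w^2-y*z^2*w^2+y*z*w^3]]] p.1 p.2.1 p.2.2

theorem us_ker (X : Fin 4 → B) (a : IX) : ∑ b, WW (tB B) X a b * us X b = 0 := by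
  obtain ⟨i, r, f⟩ := a
  simp only [Fintype.sum_prod_type, Fin.sum_univ_two]
  fin_cases i <;> fin_cases r <;> fin_cases f <;>
  simp [WW, tv, bl, cl, pv, dt, cr, tB, tZ, us] <;> ring

/-- the degenerate limit of the Todd map -/
def Ts (X : Fin 4 → B) : Fin 4 → B := ![X 0^2 - X 0 * X 2 + X 1 * X 3, -(X 0 * X 3), -(X 1 * X 3), X 0 * X 1]

theorem Ts_perp (X : Fin 4 → B) (e g : Fin 2) : dt (Ts X) (lin (tB B (cl e g)) (fun c => us X (e,g,c))) = 0 := by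
  fin_cases e <;> fin_cases g <;>
  simp [cl, dt, Ts, lin, tB, tZ, us] <;> ring
end gen

def zz : IX → IX → ℤ := fun a b =>
  (![![![![0, 0, 0, 0, 0, 0, 0, 2], ![0, -2, -2, 0, 0, -2, -2, 2]], ![![0, -2, 0, 0, 0, 0, -2, 0], ![0, 0, 0, -2, -2, 0, 0, 2]]],
    ![![![-1, 0, 0, 0, 0, 0, 0, -1], ![0, 1, 0, 0, 0, 1, 1, -1]], ![![3, 0, 0, 0, 0, 0, -2, 3], ![0, -3, 0, 0, -2, -3, -3, 5]]]] :
    Fin 2 → Fin 2 → Fin 2 → Fin 8 → ℤ) a.1 a.2.1 a.2.2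
    ((![![![0,1],![2,3]],![![4,5],![6,7]]] : Fin 2 → Fin 2 → Fin 2 → Fin 8) b.1 b.2.1 b.2.2)

theorem zz_mul : ∀ a b : IX, ∑ c, (if a = (1,1,1) then (if c = (0,0,0) then 1 else 0) else WW tZ ![-2,-1,-1,-1] a c) * zz c b = if a = b then 2 else 0 := by
  decide +kernel

theorem uuZ : uu tZ ![-2,-1,-1,-1] (0,0,0) ≠ 0 := by
  intro h
  unfold uu at h
  have : ((WW tZ ![-2,-1,-1,-1]).updateRow (1,1,1) (Pi.single (0,0,0) 1)) * (Matrix.of zz) = (2 : ℤ) • 1 := by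
    ext a b
    rw [Matrix.mul_apply]
    rw [Matrix.smul_apply, Matrix.one_apply, smul_ite, smul_zero, smul_eq_mul, mul_one, ← zz_mul a b]
    refine Finset.sum_congr rfl fun c _ => ?_
    rw [Matrix.updateRow_apply, Pi.single_apply]; rfl
  have h2 := congrArg Matrix.det this
  rw [Matrix.det_mul, h, zero_mul, Matrix.det_smul, Matrix.det_one, mul_one] at h2
  exact pow_ne_zero _ (by norm_num) h2.symm
end Todd
end

section
namespace Todd

theorem vC_tB : vC (tB ℂ) = tB R3 := by
  funext i c k; simp [vC, cc, tB]

def xI : Fin 4 → ℤ := ![-2,-1,-1,-1]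

theorem uu_t_ne : uu (tB R3) XX (0,0,0) ≠ 0 := by
  intro h
  have h2 := congrArg (eval (fun k => ((xI k : ℤ) : ℂ))) h
  rw [uu_map, map_zero] at h2
  have h3 := uu_map (Int.castRingHom ℂ) tZ xI (0,0,0)
  have e1 : (fun i c k => (eval (fun k => ((xI k : ℤ) : ℂ))) (tB R3 i c k)) = fun i c k => (Int.castRingHom ℂ) (tZ i c k) := by
    funext i c k; simp [tB]
  have e2 : (fun k => (eval (fun k => ((xI k : ℤ) : ℂ))) (XX k)) = fun k => (Int.castRingHom ℂ) (xI k) := by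
    funext k; simp [XX]
  rw [e1, e2, ← h3] at h2
  exact uuZ (Int.cast_eq_zero.1 h2)

/-- cross product of kernel data -/
def crs : Fin 4 → R3 := cr (lin (tB R3 2) (fun c => us XX (0,0,c))) (lin (tB R3 3) (fun c => us XX (0,1,c))) (lin (tB R3 4) (fun c => us XX (1,0,c)))

theorem crs_ne : crs 0 ≠ 0 := by
  intro h
  have h2 := congrArg (eval (fun k => ((xI k : ℤ) : ℂ))) h
  rw [map_zero] at h2
  simp [crs, cr, lin, tB, tZ, us, XX, xI] at h2
  norm_num at h2

theorem cr_scale3 {B : Type*} [CommRing B] (p q : B) (a b c a' b' c' : Fin 4 → B) (ha : ∀ k, p * a k = q * a' k)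
    (hb : ∀ k, p * b k = q * b' k) (hc : ∀ k, p * c k = q * c' k) (k : Fin 4) : p^3 * cr a b c k = q^3 * cr a' b' c' k := by
  have e : ∀ (t : B) (a b c : Fin 4 → B), t^3 * cr a b c k = cr (fun k => t * a k) (fun k => t * b k) (fun k => t * c k) k := by
    intro t a b c
    fin_cases k <;> simp [cr] <;> ring
  rw [e, e]
  simp only [ha, hb, hc]

theorem TT_crs (k : Fin 4) : (us XX (0,0,0))^3 * TT (tB R3) XX k = (uu (tB R3) XX (0,0,0))^3 * crs k := by
  have h : ∀ l, us XX (0,0,0) * uu (tB R3) XX l = uu (tB R3) XX (0,0,0) * us XX l := fun l =>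
    (uu_prop (tB R3) XX (us XX) (us_ker XX) (0,0,0) l).symm
  apply cr_scale3
  all_goals
    intro k
    simp only [lin]
  · linear_combination tB R3 2 0 k * h (0,0,0) + tB R3 2 1 k * h (0,0,1)
  · linear_combination tB R3 3 0 k * h (0,1,0) + tB R3 3 1 k * h (0,1,1)
  · linear_combination tB R3 4 0 k * h (1,0,0) + tB R3 4 1 k * h (1,0,1)

theorem dom0 (a : ℕ) (F : R3) (hF : F.IsHomogeneous a) (h : aeval (TT (vC (tB ℂ)) XX) F = 0) : F = 0 := by
  rw [vC_tB] at h
  have h1 := aeval_scale hF ((us XX (0,0,0))^3) (TT (tB R3) XX)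
  rw [h, mul_zero, funext TT_crs, aeval_scale hF] at h1
  have h2 : aeval crs F = 0 := (mul_eq_zero.1 h1).resolve_left (pow_ne_zero _ (pow_ne_zero _ uu_t_ne))
  have h3 := aeval_scale hF (Ts XX 0) crs
  have e : (fun k => Ts XX 0 * crs k) = fun k => crs 0 * Ts XX k := by
    funext k
    exact cr_perp _ _ _ _ (Ts_perp XX 0 0) (Ts_perp XX 0 1) (Ts_perp XX 1 0) k
  rw [e, aeval_scale hF, h2, mul_zero] at h3
  have h4 : aeval (Ts XX) F = 0 := (mul_eq_zero.1 h3).resolve_left (pow_ne_zero _ crs_ne)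
  have h5 := congrArg (aeval (![X 1 * X 3, X 2 * X 3, X 1 * X 3 - X 2 ^ 2 - X 2 * X 0, -(X 1 * X 2)] : Fin 4 → R3)) h4
  rw [comp_aeval_apply, map_zero] at h5
  have e2 : (fun k => aeval (![X 1 * X 3, X 2 * X 3, X 1 * X 3 - X 2 ^ 2 - X 2 * X 0, -(X 1 * X 2)] : Fin 4 → R3) (Ts XX k))
     = fun k => (X 1 * X 2 * X 3 : R3) * X k := by
    funext k
    fin_cases k <;> simp [Ts, XX] <;> ring
  rw [e2, aeval_scale hF] at h5
  have h6 : aeval (X : Fin 4 → R3) F = 0 := (mul_eq_zero.1 h5).resolve_left (pow_ne_zero _ (mul_ne_zero (mul_ne_zero (X_ne_zero _) (X_ne_zero _)) (X_ne_zero _)))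
  rwa [aeval_X_left_apply] at h6

abbrev A48 := MvPolynomial (Fin 6 × Fin 2 × Fin 4) ℂ
def vG : Fin 6 → Fin 2 → Fin 4 → A48 := fun i c k => X (i, c, k)
/-- evaluation at a configuration -/
def ev (v : Fin 6 → Fin 2 → C4) : A48 →+* ℂ := eval (fun p => v p.1 p.2.1 p.2.2)
theorem ev_vG (v : Fin 6 → Fin 2 → C4) : (fun i c k => ev v (vG i c k)) = v := by
  funext i c k; simp [ev, vG]

def TG : Fin 4 → MvPolynomial (Fin 4) A48 := TT (fun i c k => C (vG i c k)) (fun k => X k)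
theorem TG_map (v : Fin 6 → Fin 2 → C4) (k : Fin 4) : map (ev v) (TG k) = TT (vC v) XX k := by
  unfold TG
  rw [TT_map]
  congr 1
  · funext i c k
    rw [map_C, show ev v (vG i c k) = v i c k from congrFun (congrFun (congrFun (ev_vG v) i) c) k]; rfl
  · funext k
    rw [map_X]; rfl

def Phi (φ : R3 →ₗ[ℂ] ℂ) : MvPolynomial (Fin 4) A48 →ₗ[A48] A48 :=
  (MvPolynomial.basisMonomials (Fin 4) A48).constr A48 (fun m => C (φ (monomial m 1)))

theorem Phi_map (φ : R3 →ₗ[ℂ] ℂ) (v : Fin 6 → Fin 2 → C4) (G : MvPolynomial (Fin 4) A48) :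
    ev v (Phi φ G) = φ (map (ev v) G) := by
  induction G using MvPolynomial.induction_on' with
  | monomial m c =>
    have : monomial m c = c • (MvPolynomial.basisMonomials (Fin 4) A48 m) := by
      simp [smul_monomial]
    rw [this, map_smul, Phi, Module.Basis.constr_basis, smul_eq_mul, map_mul]
    rw [coe_basisMonomials, smul_monomial, map_monomial]
    have : monomial m (ev v (c • 1)) = (ev v c) • (monomial m 1 : R3) := by simp [smul_monomial]
    rw [this, map_smul, smul_eq_mul]
    simp [ev]
  | add p q hp hq => simp only [map_add, hp, hq]

/-- index set of monomials of degree a -/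
abbrev MI (a : ℕ) := {m : Fin 4 →₀ ℕ // m ∈ Finset.finsuppAntidiag (Finset.univ : Finset (Fin 4)) a}

theorem mem_MI {a : ℕ} (m : Fin 4 →₀ ℕ) : m ∈ Finset.finsuppAntidiag (Finset.univ : Finset (Fin 4)) a ↔ m.degree = a := by
  simp [Finset.mem_finsuppAntidiag, Finsupp.degree_eq_sum]

theorem aeval_MI {a : ℕ} {F : R3} (hF : F.IsHomogeneous a) (Y : Fin 4 → R3) :
    aeval Y F = ∑ m : MI a, coeff m.1 F • ∏ k, Y k ^ m.1 k := by
  rw [aeval_def, eval₂_eq']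
  have hs : F.support ⊆ Finset.finsuppAntidiag (Finset.univ : Finset (Fin 4)) a := by
    intro m hm
    rw [mem_MI]
    have := hF (mem_support_iff.1 hm)
    rw [← this, Finsupp.degree_eq_weight_one]
    try rfl
  rw [Finset.sum_subset hs]
  · rw [← Finset.sum_coe_sort]
    refine Finset.sum_congr rfl fun m _ => ?_
    rw [Algebra.smul_def]
  · intro m _ hm
    rw [notMem_support_iff.1 hm]; simp

theorem exists_phi (a : ℕ) : ∃ φ : MI a → R3 →ₗ[ℂ] ℂ, ∀ m n : MI a, φ m (∏ k, TT (vC (tB ℂ)) XX k ^ n.1 k) = if m = n then 1 else 0 := by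
  set f : MI a → R3 := fun n => ∏ k, TT (vC (tB ℂ)) XX k ^ n.1 k
  have hli : LinearIndependent ℂ f := by
    rw [Fintype.linearIndependent_iff]
    intro g hg i
    set F : R3 := ∑ m : MI a, monomial m.1 (g m) with hFd
    have hc : ∀ m : MI a, coeff m.1 F = g m := by
      intro m
      simp only [hFd, coeff_sum, coeff_monomial]
      rw [Finset.sum_eq_single m]
      · simp
      · intro b _ hb
        rw [if_neg]; exact fun h => hb (Subtype.ext h)
      · simp
    have hF : F.IsHomogeneous a := IsHomogeneous.sum _ _ _ fun m _ => isHomogeneous_monomial _ ((mem_MI _).1 m.2)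
    have := dom0 a F hF (by
      rw [aeval_MI hF]; simp only [hc]; exact hg)
    rw [← hc i, this, coeff_zero]
  have hinj : LinearMap.ker (Fintype.linearCombination ℂ f) = ⊥ := by
    rw [LinearMap.ker_eq_bot]
    exact hli.fintypeLinearCombination_injective
  obtain ⟨g, hg⟩ := LinearMap.exists_leftInverse_of_injective _ hinj
  refine ⟨fun m => (LinearMap.proj m).comp g, fun m n => ?_⟩
  have h2 := congrArg (fun t => t (Pi.single n 1) m) hg
  simp only [LinearMap.comp_apply, LinearMap.id_apply, Fintype.linearCombination_apply_single, one_smul, Pi.single_apply] at h2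
  exact h2

theorem exists_dom (a : ℕ) : ∃ P : A48, P ≠ 0 ∧ ∀ v, ev v P ≠ 0 → ∀ F : R3, F.IsHomogeneous a → aeval (TT (vC v) XX) F = 0 → F = 0 := by
  classical
  obtain ⟨φ, hφ⟩ := exists_phi a
  let M : Matrix (MI a) (MI a) A48 := Matrix.of fun m n => Phi (φ m) (∏ k, TG k ^ n.1 k)
  have hM : ∀ v m n, ev v (M m n) = φ m (∏ k, TT (vC v) XX k ^ n.1 k) := by
    intro v m n
    simp only [M, Matrix.of_apply]
    rw [Phi_map]
    simp only [map_prod, map_pow, TG_map]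
  refine ⟨M.det, ?_, ?_⟩
  · intro h
    have h2 := congrArg (ev (tB ℂ)) h
    rw [map_zero, RingHom.map_det] at h2
    have : (ev (tB ℂ)).mapMatrix M = 1 := by
      ext m n
      rw [RingHom.mapMatrix_apply, Matrix.map_apply, hM, hφ, Matrix.one_apply]
    rw [this, Matrix.det_one] at h2
    exact one_ne_zero h2
  · intro v hv F hF h
    rw [RingHom.map_det] at hv
    have h0 : ((ev v).mapMatrix M).mulVec (fun n => coeff n.1 F) = 0 := by
      ext m
      rw [aeval_MI hF] at h
      have := congrArg (φ m) h
      rw [map_sum, map_zero] at this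
      rw [Pi.zero_apply, ← this]
      simp only [Matrix.mulVec, dotProduct, RingHom.mapMatrix_apply, Matrix.map_apply, hM, map_smul, smul_eq_mul]
      exact Finset.sum_congr rfl fun _ _ => mul_comm _ _
    have h1 := Matrix.eq_zero_of_mulVec_eq_zero hv h0
    have h2 := aeval_MI hF (X : Fin 4 → R3)
    rw [aeval_X_left_apply] at h2
    rw [h2]
    refine Finset.sum_eq_zero fun m _ => ?_
    have := congrFun h1 m
    simp only [Pi.zero_apply] at this
    rw [this, zero_smul]
end Todd
end

section
namespace Todd

/-- a test configuration in general position -/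
def gZ : Fin 6 → Fin 2 → Fin 4 → ℤ :=
  ![![![1, 0, 0, -1], ![0, 1, 0, -2]], ![![1, 0, 0, -2], ![0, 1, 2, -2]], ![![1, 0, -1, 2], ![0, 1, 2, -1]],
    ![![1, 0, 2, 1], ![0, 1, 1, 2]], ![![1, 0, 0, 2], ![0, 1, -1, 0]], ![![1, 0, 1, 0], ![0, 1, 0, 2]]]

theorem gZ1 : ∀ i j, i ≠ j → d4 (gZ i 0) (gZ i 1) (gZ j 0) (gZ j 1) ≠ 0 := by decide +kernel
theorem gZ2 : ∀ i j k l, [i,j,k,l].Nodup → qq (pv gZ (gZ l 0)) gZ i j k ≠ 0 := by decide +kernel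
theorem gZ3 : ∀ m n i j k, [m,n,i,j,k].Nodup → c5 gZ m n i j k ≠ 0 := by decide +kernel

def gC : Fin 6 → Fin 2 → C4 := fun i c k => Int.castRingHom ℂ (gZ i c k)

theorem gC_ne {x : ℤ} (h : x ≠ 0) : Int.castRingHom ℂ x ≠ 0 := by simpa using h

theorem gC_Gen : Gen gC := by
  refine ⟨fun i j h => ?_, fun i j k l h => ?_, fun m n i j k h => ?_⟩
  · have := gC_ne (gZ1 i j h)
    rwa [d4_map'] at this
  · have := gC_ne (gZ2 i j k l h)
    rwa [qq_map, pv_map] at this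
  · have := gC_ne (gZ3 m n i j k h)
    rwa [c5_map] at this

open Classical in
def PG : A48 :=
  (∏ p : Fin 6 × Fin 6, if p.1 ≠ p.2 then d4 (vG p.1 0) (vG p.1 1) (vG p.2 0) (vG p.2 1) else 1) *
  (∏ p : Fin 6 × Fin 6 × Fin 6 × Fin 6, if [p.1,p.2.1,p.2.2.1,p.2.2.2].Nodup then
     qq (pv vG (vG p.2.2.2 0)) vG p.1 p.2.1 p.2.2.1 else 1) *
  (∏ p : Fin 6 × Fin 6 × Fin 6 × Fin 6 × Fin 6, if [p.1,p.2.1,p.2.2.1,p.2.2.2.1,p.2.2.2.2].Nodup then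
     c5 vG p.1 p.2.1 p.2.2.1 p.2.2.2.1 p.2.2.2.2 else 1)

theorem ev1 (v : Fin 6 → Fin 2 → C4) (i j : Fin 6) : ev v (d4 (vG i 0) (vG i 1) (vG j 0) (vG j 1)) = d4 (v i 0) (v i 1) (v j 0) (v j 1) := by
  rw [d4_map']
  have h := ev_vG v
  have : ∀ i c, (fun k => ev v (vG i c k)) = v i c := fun i c => congrFun (congrFun h i) c
  simp only [this]
theorem ev2 (v : Fin 6 → Fin 2 → C4) (i j k l : Fin 6) : ev v (qq (pv vG (vG l 0)) vG i j k) = qq (pv v (v l 0)) v i j k := by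
  rw [qq_map, pv_map]
  have h := ev_vG v
  have : ∀ i c, (fun k => ev v (vG i c k)) = v i c := fun i c => congrFun (congrFun h i) c
  rw [h, this]
theorem ev3 (v : Fin 6 → Fin 2 → C4) (m n i j k : Fin 6) : ev v (c5 vG m n i j k) = c5 v m n i j k := by
  rw [c5_map, ev_vG]

theorem PG_iff (v : Fin 6 → Fin 2 → C4) : ev v PG ≠ 0 ↔ Gen v := by
  unfold PG
  rw [map_mul, map_mul, map_prod, map_prod, map_prod, mul_ne_zero_iff, mul_ne_zero_iff,
    Finset.prod_ne_zero_iff, Finset.prod_ne_zero_iff, Finset.prod_ne_zero_iff]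
  constructor
  · rintro ⟨⟨h1, h2⟩, h3⟩
    refine ⟨fun i j h => ?_, fun i j k l h => ?_, fun m n i j k h => ?_⟩
    · have := h1 (i, j) (Finset.mem_univ _)
      rw [if_pos h, ev1] at this; exact this
    · have := h2 (i, j, k, l) (Finset.mem_univ _)
      rw [if_pos h, ev2] at this; exact this
    · have := h3 (m, n, i, j, k) (Finset.mem_univ _)
      rw [if_pos h, ev3] at this; exact this
  · rintro ⟨h1, h2, h3⟩
    refine ⟨⟨fun p _ => ?_, fun p _ => ?_⟩, fun p _ => ?_⟩
    · split_ifs with h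
      · rw [ev1]; exact h1 _ _ h
      · rw [map_one]; exact one_ne_zero
    · split_ifs with h
      · rw [ev2]; exact h2 _ _ _ _ h
      · rw [map_one]; exact one_ne_zero
    · split_ifs with h
      · rw [ev3]; exact h3 _ _ _ _ _ h
      · rw [map_one]; exact one_ne_zero

theorem d4_span {a b c d : C4} (h : d4 a b c d ≠ 0) (s t p q : ℂ) (e : s • a + t • b = p • c + q • d) :
    s = 0 ∧ t = 0 ∧ p = 0 ∧ q = 0 := by
  have e' : ∀ k, s * a k + t * b k = p * c k + q * d k := fun k => congrFun e k
  have h0 := e' 0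
  have h1 := e' 1
  have h2 := e' 2
  have h3 := e' 3
  have key : ∀ x : ℂ, x * d4 a b c d = 0 → x = 0 := fun x hx => (mul_eq_zero.1 hx).resolve_right h
  have z : ∀ k, s * a k + t * b k - p * c k - q * d k = 0 := fun k => by linear_combination e' k
  have hs : ∀ w : Fin 4 → ℂ, w = (fun k => s * a k + t * b k - p * c k - q * d k) → w = 0 := by
    intro w hw; rw [hw]; funext k; exact z k
  have hw := hs _ rfl
  have e1 : d4 (fun k => s * a k + t * b k - p * c k - q * d k) b c d = s * d4 a b c d := by simp only [d4]; ring
  have e2 : d4 a (fun k => s * a k + t * b k - p * c k - q * d k) c d = t * d4 a b c d := by simp only [d4]; ring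
  have e3 : d4 a b (fun k => s * a k + t * b k - p * c k - q * d k) d = -p * d4 a b c d := by simp only [d4]; ring
  have e4 : d4 a b c (fun k => s * a k + t * b k - p * c k - q * d k) = -q * d4 a b c d := by simp only [d4]; ring
  rw [hw] at e1 e2 e3 e4
  have z1 : d4 0 b c d = 0 := by simp [d4]
  have z2 : d4 a 0 c d = 0 := by simp [d4]
  have z3 : d4 a b 0 d = 0 := by simp [d4]
  have z4 : d4 a b c 0 = 0 := by simp [d4]
  rw [z1] at e1; rw [z2] at e2; rw [z3] at e3; rw [z4] at e4
  exact ⟨key _ e1.symm, key _ e2.symm, neg_eq_zero.1 (key _ e3.symm), neg_eq_zero.1 (key _ e4.symm)⟩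

theorem exists_ne6 : ∀ i : Fin 6, ∃ j, i ≠ j := by decide

theorem final (a : ℕ) (ha : 4 ≤ a) :
    GeneralLines 6 (fun L =>
      (a + 3).choose 3 - 6 * (a + 1) ≤
        Module.finrank ℂ
          ↥(linSys (19 * a - 72) L (fun _ => 5 * a - 19))) := by
  obtain ⟨P, hP, hdom⟩ := exists_dom a
  refine ⟨PG * P, mul_ne_zero ?_ hP, ?_⟩
  · intro h
    apply (PG_iff gC).2 gC_Gen
    rw [h, map_zero]
  · intro v hv
    have hv' : ev v (PG * P) ≠ 0 := hv
    rw [map_mul, mul_ne_zero_iff] at hv'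
    have hg := (PG_iff v).1 hv'.1
    refine ⟨fun i => ?_, fun i j hij => ?_, ?_⟩
    · obtain ⟨j, hj⟩ := exists_ne6 i
      rw [LinearIndependent.pair_iff]
      intro s t hst
      have := d4_span (hg.hD i j hj) s t 0 0 (by rw [hst]; simp)
      exact ⟨this.1, this.2.1⟩
    · rw [Submodule.eq_bot_iff]
      rintro x ⟨h1, h2⟩
      obtain ⟨s, t, rfl⟩ := Submodule.mem_span_pair.1 h1
      obtain ⟨p, q, h3⟩ := Submodule.mem_span_pair.1 h2
      have := d4_span (hg.hD i j hij) s t p q h3.symm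
      rw [this.1, this.2.1]; simp
    · obtain ⟨st, hst, hcl⟩ := exists_st hg
      refine main_bound hg hst a ha ?_
      have e : SS v st = TT (vC v) XX := by
        have h2 : st 2 = ut v 0 0 := hcl 0 0
        have h3 : st 3 = ut v 0 1 := hcl 0 1
        have h4 : st 4 = ut v 1 0 := hcl 1 0
        unfold SS TT
        rw [h2, h3, h4]; rfl
      rw [e]
      exact hdom v hv'.2
end Todd
end

/-- For every `a ≥ 4` and six general lines in `P^3`, the system of degree
`19a - 72` forms with multiplicity `5a - 19` along each of the six lines has
dimension at least `binom(a+3,3) - 6(a+1)` (obtained by applying the Todd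
transformation to the nonspecial system of degree-`a` surfaces through the six
lines; for large `a` this yields unexpected systems). -/
theorem stmt_19 (a : ℕ) (ha : 4 ≤ a) :
    GeneralLines 6 (fun L =>
      (a + 3).choose 3 - 6 * (a + 1) ≤
        Module.finrank ℂ
          ↥(linSys (19 * a - 72) L (fun _ => 5 * a - 19))) := by
  exact Todd.final a ha
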